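/- arXiv:1212.0719 — 3 statements merged into one kernel-verified Lean document; each statement's English description precedes it below -/
import Mathlib

section
/- Under the hypotheses of the semilocal convergence theorem for Halley's method (F : D → Y twice continuously Fréchet differentiable between Banach spaces, x₀ ∈ D with F'(x₀) invertible, h : [0,R) → ℝ a majorizing function to F at x₀ satisfying (A1)–(A3) with smallest zero t*), the limit x* of the Halley sequence is the unique zero of F in the open ball B(x₀,ρ), where ρ := sup{t ∈ [t*,R) : h(t) ≤ 0}. -/
open Metric Set

lemma halley_aux_growth {X E : Type*} [NormedAddCommGroup X] [NormedSpace ℝ X]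
    [NormedAddCommGroup E] [NormedSpace ℝ E] (φ : X → E) (φ' : X → X →L[ℝ] E)
    (x₀ : X) (R : ℝ) (k k1 : ℝ → ℝ)
    (hφ : ∀ w ∈ ball x₀ R, HasFDerivAt φ (φ' w) w)
    (hk : ∀ s ∈ Ico (0:ℝ) R, HasDerivWithinAt k (k1 s) (Ico 0 R) s)
    (hmono : MonotoneOn k1 (Ico 0 R))
    (hb : ∀ w ∈ ball x₀ R, ‖φ' w‖ ≤ k1 ‖w - x₀‖)
    (u v : X) (a b : ℝ) (ha : 0 ≤ a) (hva : ‖v - x₀‖ ≤ a) (huv : ‖u - v‖ ≤ b - a)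
    (hbR : b < R) : ‖φ u - φ v‖ ≤ k b - k a := by
  have hab : 0 ≤ b - a := (norm_nonneg _).trans huv
  have hs : ∀ τ ∈ Icc (0:ℝ) 1, a + τ * (b - a) ∈ Ico (0:ℝ) R := by
    rintro τ ⟨h0, h1⟩
    constructor
    · positivity
    · nlinarith
  have hn : ∀ τ ∈ Icc (0:ℝ) 1, ‖(v + τ • (u - v)) - x₀‖ ≤ a + τ * (b - a) := by
    rintro τ ⟨h0, h1⟩
    calc ‖(v + τ • (u - v)) - x₀‖ = ‖(v - x₀) + τ • (u - v)‖ := by congr 1; abel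
      _ ≤ ‖v - x₀‖ + ‖τ • (u - v)‖ := norm_add_le _ _
      _ = ‖v - x₀‖ + τ * ‖u - v‖ := by rw [norm_smul, Real.norm_of_nonneg h0]
      _ ≤ _ := by gcongr
  have hball : ∀ τ ∈ Icc (0:ℝ) 1, v + τ • (u - v) ∈ ball x₀ R := by
    intro τ hτ
    rw [mem_ball, dist_eq_norm]
    exact (hn τ hτ).trans_lt (hs τ hτ).2
  have hder : ∀ τ ∈ Icc (0:ℝ) 1, HasDerivAt (fun τ : ℝ => φ (v + τ • (u - v)) - φ v)
      (φ' (v + τ • (u - v)) (u - v)) τ := by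
    intro τ hτ
    have h1 : HasDerivAt (fun τ : ℝ => v + τ • (u - v)) (u - v) τ := by
      simpa using ((hasDerivAt_id τ).smul_const (u - v)).const_add v
    exact ((hφ _ (hball τ hτ)).comp_hasDerivAt τ h1).sub_const _
  have hl : ∀ τ : ℝ, HasDerivAt (fun τ : ℝ => a + τ * (b - a)) (b - a) τ := by
    intro τ
    simpa using ((hasDerivAt_id τ).mul_const (b - a)).const_add a
  have hB : ∀ τ ∈ Icc (0:ℝ) 1, HasDerivWithinAt (fun τ : ℝ => k (a + τ * (b - a)) - k a)
      (k1 (a + τ * (b - a)) * (b - a)) (Icc 0 1) τ := by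
    intro τ hτ
    exact ((hk _ (hs τ hτ)).comp τ (hl τ).hasDerivWithinAt (fun τ hτ => hs τ hτ)).sub_const _
  have key := image_norm_le_of_norm_deriv_right_le_deriv_boundary'
    (f := fun τ : ℝ => φ (v + τ • (u - v)) - φ v)
    (f' := fun τ : ℝ => φ' (v + τ • (u - v)) (u - v)) (a := 0) (b := 1)
    (B := fun τ : ℝ => k (a + τ * (b - a)) - k a)
    (B' := fun τ : ℝ => k1 (a + τ * (b - a)) * (b - a))
    (fun τ hτ => (hder τ hτ).continuousAt.continuousWithinAt)
    (fun τ hτ => (hder τ (Ico_subset_Icc_self hτ)).hasDerivWithinAt)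
    (by simp)
    (fun τ hτ => (hB τ hτ).continuousWithinAt)
    (fun τ hτ => (hB τ (Ico_subset_Icc_self hτ)).mono_of_mem_nhdsWithin
      (Filter.mem_of_superset (Icc_mem_nhdsGE hτ.2) (Icc_subset_Icc_left hτ.1)))
    (fun τ hτ' => by
      have hτ := Ico_subset_Icc_self hτ'
      have h3 : ‖φ' (v + τ • (u - v))‖ ≤ k1 (a + τ * (b - a)) :=
        (hb _ (hball τ hτ)).trans (hmono
          ⟨norm_nonneg _, (hn τ hτ).trans_lt (hs τ hτ).2⟩ (hs τ hτ) (hn τ hτ))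
      exact ((φ' _).le_opNorm _).trans (mul_le_mul h3 huv (norm_nonneg _)
        ((norm_nonneg _).trans h3)))
    (right_mem_Icc.2 zero_le_one)
  simpa using key

/-- uniqueness: under the hypotheses of the semilocal convergence
theorem for Halley's method, the limit `xs` of the Halley sequence `(x_k)` is
the unique zero of `F` in the open ball `B(x₀,ρ)`, where
`ρ = sup {s ∈ [t*,R) : h(s) ≤ 0}`. -/
theorem halley_method_uniqueness
    {X Y : Type*} [NormedAddCommGroup X] [NormedSpace ℝ X] [CompleteSpace X]
    [NormedAddCommGroup Y] [NormedSpace ℝ Y] [CompleteSpace Y]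
    (D : Set X) (hD : IsOpen D) (hDconv : Convex ℝ D)
    (F : X → Y) (F' : X → X →L[ℝ] Y) (F'' : X → X →L[ℝ] X →L[ℝ] Y)
    (hdF : ∀ x ∈ D, HasFDerivAt F (F' x) x)
    (hdF' : ∀ x ∈ D, HasFDerivAt F' (F'' x) x)
    (hcF'' : ContinuousOn F'' D)
    (x₀ : X) (hx₀ : x₀ ∈ D)
    (e0 : X ≃L[ℝ] Y) (he0 : (e0 : X →L[ℝ] Y) = F' x₀)
    (R : ℝ) (hR : 0 < R) (hballD : ball x₀ R ⊆ D)
    (h h1 h2 : ℝ → ℝ)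
    (hd1 : ∀ s ∈ Ico (0:ℝ) R, HasDerivWithinAt h (h1 s) (Ico 0 R) s)
    (hd2 : ∀ s ∈ Ico (0:ℝ) R, HasDerivWithinAt h1 (h2 s) (Ico 0 R) s)
    (hc2 : ContinuousOn h2 (Ico 0 R))
    (hA1a : 0 < h 0) (hA1b : 0 < h2 0) (hA1c : h1 0 = -1)
    (hA2a : ConvexOn ℝ (Ico 0 R) h2) (hA2b : StrictMonoOn h2 (Ico 0 R))
    (tstar : ℝ) (htsmem : tstar ∈ Ioo 0 R) (htszero : h tstar = 0)
    (htsmin : ∀ s ∈ Ioo (0:ℝ) R, h s = 0 → tstar ≤ s) (htsder : h1 tstar < 0)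
    (hmaj : ∀ x ∈ ball x₀ R, ∀ y ∈ ball x₀ R, ‖y - x‖ + ‖x - x₀‖ < R →
      ‖(ContinuousLinearMap.compL ℝ X Y X (e0.symm : Y →L[ℝ] X)).comp
          (F'' y - F'' x)‖ ≤ h2 (‖y - x‖ + ‖x - x₀‖) - h2 ‖x - x₀‖)
    (hinit1 : ‖(e0.symm : Y →L[ℝ] X) (F x₀)‖ ≤ h 0)
    (hinit2 : ‖(ContinuousLinearMap.compL ℝ X Y X (e0.symm : Y →L[ℝ] X)).comp
        (F'' x₀)‖ ≤ h2 0)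
    (x : ℕ → X) (e : ℕ → (X ≃L[ℝ] Y)) (m : ℕ → (X ≃L[ℝ] X))
    (hx0 : x 0 = x₀)
    (he : ∀ k, (e k : X →L[ℝ] Y) = F' (x k))
    (hm : ∀ k, (m k : X →L[ℝ] X) = ContinuousLinearMap.id ℝ X -
      (2⁻¹ : ℝ) • (((e k).symm : Y →L[ℝ] X).comp
        ((F'' (x k)) ((e k).symm (F (x k))))))
    (hxrec : ∀ k, x (k + 1) = x k - (m k).symm ((e k).symm (F (x k))))
    (xs : X) (hxs : xs ∈ closedBall x₀ tstar)
    (hlim : Filter.Tendsto x Filter.atTop (nhds xs)) (hzero : F xs = 0) :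
    xs ∈ ball x₀ (sSup {s | s ∈ Ico tstar R ∧ h s ≤ 0}) ∧
    ∀ y ∈ ball x₀ (sSup {s | s ∈ Ico tstar R ∧ h s ≤ 0}), F y = 0 → y = xs := by
  -- basic facts on h
  have h0R : (0:ℝ) ∈ Ico 0 R := ⟨le_rfl, hR⟩
  have hint : interior (Ico (0:ℝ) R) = Ioo 0 R := interior_Ico
  have h2pos : ∀ s ∈ Ico (0:ℝ) R, 0 < h2 s := fun s hs =>
    hA1b.trans_le (hA2b.monotoneOn h0R hs hs.1)
  have h1mono : MonotoneOn h1 (Ico 0 R) := by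
    refine monotoneOn_of_hasDerivWithinAt_nonneg (f' := h2) (convex_Ico 0 R)
      (fun s hs => (hd2 s hs).continuousWithinAt) ?_ ?_
    · intro s hs
      exact (hd2 s (interior_subset hs)).mono interior_subset
    · intro s hs
      exact (h2pos s (interior_subset hs)).le
  have hcont : ContinuousOn h (Ico 0 R) := fun s hs => (hd1 s hs).continuousWithinAt
  have hdat : ∀ s ∈ Ioo (0:ℝ) R, HasDerivAt h (h1 s) s := fun s hs =>
    (hd1 s (Ioo_subset_Ico_self hs)).hasDerivAt (Ico_mem_nhds hs.1 hs.2)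
  have hconv : ConvexOn ℝ (Ico 0 R) h := by
    refine MonotoneOn.convexOn_of_deriv (convex_Ico 0 R) hcont ?_ ?_
    · rw [hint]
      exact fun s hs => (hdat s hs).differentiableAt.differentiableWithinAt
    · rw [hint]
      intro s hs t ht hst
      rw [(hdat s hs).deriv, (hdat t ht).deriv]
      exact h1mono (Ioo_subset_Ico_self hs) (Ioo_subset_Ico_self ht) hst
  -- strict negativity between a nonpositive and a negative value
  have hneg : ∀ p ∈ Ico (0:ℝ) R, ∀ q ∈ Ico (0:ℝ) R, ∀ r, p < r → r < q → h p ≤ 0 → h q ≤ 0 →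
      (h p < 0 ∨ h q < 0) → h r < 0 := by
    intro p hp q hq r hpr hrq hhp hhq hor
    have hpq : 0 < q - p := by linarith
    have := hconv.2 hp hq
      (show 0 ≤ (q - r) / (q - p) from div_nonneg (by linarith) hpq.le)
      (show 0 ≤ (r - p) / (q - p) from div_nonneg (by linarith) hpq.le)
      (by field_simp; ring)
    have hr : (q - r) / (q - p) * p + (r - p) / (q - p) * q = r := by field_simp; ring
    simp only [smul_eq_mul] at this
    rw [hr] at this
    have ha : 0 < (q - r) / (q - p) := div_pos (by linarith) hpq
    have hb : 0 < (r - p) / (q - p) := div_pos (by linarith) hpq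
    rcases hor with h' | h'
    · nlinarith [mul_neg_of_pos_of_neg ha h', mul_nonneg hb.le (neg_nonneg.2 hhq)]
    · nlinarith [mul_neg_of_pos_of_neg hb h', mul_nonneg ha.le (neg_nonneg.2 hhp)]
  -- points right of tstar where h is negative
  have hnear : ∀ q, tstar < q → ∃ p, tstar < p ∧ p < q ∧ p < R ∧ h p < 0 := by
    intro q hq
    have hsl := (hasDerivAt_iff_tendsto_slope.1 (hdat tstar htsmem)).eventually
      (gt_mem_nhds htsder)
    have hsl' : ∀ᶠ z in nhdsWithin tstar (Ioi tstar), slope h tstar z < 0 :=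
      hsl.filter_mono (nhdsWithin_mono _ (fun z hz => ne_of_gt hz))
    have hm' : ∀ᶠ z in nhdsWithin tstar (Ioi tstar), z ∈ Ioo tstar (min q R) :=
      Ioo_mem_nhdsGT (lt_min hq htsmem.2)
    obtain ⟨p, hp1, hp2⟩ := (hsl'.and hm').exists
    refine ⟨p, hp2.1, hp2.2.trans_le (min_le_left _ _), hp2.2.trans_le (min_le_right _ _), ?_⟩
    rw [slope_def_field, htszero, sub_zero] at hp1
    have hpp : 0 < p - tstar := sub_pos.2 hp2.1
    by_contra hcon
    exact absurd (div_nonneg (not_lt.1 hcon) hpp.le) (not_le.2 hp1)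
  set S : Set ℝ := {s | s ∈ Ico tstar R ∧ h s ≤ 0} with hS
  have hSne : S.Nonempty := ⟨tstar, ⟨le_rfl, htsmem.2⟩, htszero.le⟩
  have hSbdd : BddAbove S := ⟨R, fun s hs => hs.1.2.le⟩
  have hlt : tstar < sSup S := by
    obtain ⟨p, hp1, _, hp3, hp4⟩ := hnear (tstar + 1) (by linarith)
    exact hp1.trans_le (le_csSup hSbdd ⟨⟨hp1.le, hp3⟩, hp4.le⟩)
  have hxs' : ‖xs - x₀‖ ≤ tstar := by rwa [mem_closedBall, dist_eq_norm] at hxs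
  refine ⟨by rw [mem_ball, dist_eq_norm]; exact hxs'.trans_lt hlt, ?_⟩
  intro y hy hFy
  rw [mem_ball, dist_eq_norm] at hy
  obtain ⟨s', hs'S, hs'⟩ := exists_lt_of_lt_csSup hSne (max_lt hlt hy)
  obtain ⟨s0, hs01, hs02⟩ := exists_between hs'
  have hts0 : tstar < s0 := (le_max_left _ _).trans_lt hs01
  have hys0 : ‖y - x₀‖ ≤ s0 := ((le_max_right _ _).trans_lt hs01).le
  have hs'R : s' < R := hs'S.1.2
  have hs0R : s0 < R := hs02.trans hs'R
  have ht0 : 0 < tstar := htsmem.1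
  have hhs0 : h s0 < 0 := by
    obtain ⟨p, hp1, hp2, hp3, hp4⟩ := hnear s0 hts0
    exact hneg p ⟨by linarith, hp3⟩ s' ⟨by linarith, hs'R⟩ s0 hp2 hs02 hp4.le hs'S.2 (Or.inl hp4)
  -- the simplified Newton map
  let A : Y →L[ℝ] X := (e0.symm : Y →L[ℝ] X)
  let G : X → X := fun w => w - A (F w)
  let g : ℝ → ℝ := fun s => s + h s
  have hgd : ∀ s ∈ Ico (0:ℝ) R, HasDerivWithinAt g (1 + h1 s) (Ico 0 R) s := fun s hs =>
    (hasDerivWithinAt_id s _).add (hd1 s hs)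
  have hg1 : MonotoneOn (fun s => 1 + h1 s) (Ico 0 R) := fun s hs t ht hst =>
    add_le_add_right (h1mono hs ht hst) 1
  have hgmono : MonotoneOn g (Ico 0 R) := by
    refine monotoneOn_of_hasDerivWithinAt_nonneg (f' := fun s => 1 + h1 s) (convex_Ico 0 R)
      (fun s hs => (hgd s hs).continuousWithinAt) ?_ ?_
    · intro s hs
      exact (hgd s (interior_subset hs)).mono interior_subset
    · intro s hs
      have := h1mono h0R (interior_subset hs) (interior_subset hs).1
      show 0 ≤ 1 + h1 s
      linarith
  have hAF' : A.comp (F' x₀) = ContinuousLinearMap.id ℝ X := by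
    rw [← he0]; ext v; simp [A]
  have hx₀R : x₀ ∈ ball x₀ R := mem_ball_self hR
  have hF''b : ∀ w ∈ ball x₀ R,
      ‖(ContinuousLinearMap.compL ℝ X Y X A).comp (F'' w)‖ ≤ h2 ‖w - x₀‖ := by
    intro w hw
    have hw' := hw
    rw [mem_ball, dist_eq_norm] at hw'
    have h3 := hmaj x₀ hx₀R w hw (by simpa using hw')
    simp only [sub_self, norm_zero, add_zero] at h3
    have h4 : (ContinuousLinearMap.compL ℝ X Y X A).comp (F'' w) =
        (ContinuousLinearMap.compL ℝ X Y X A).comp (F'' w - F'' x₀) +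
        (ContinuousLinearMap.compL ℝ X Y X A).comp (F'' x₀) := by
      ext a b; simp
    rw [h4]
    refine (norm_add_le _ _).trans ?_
    have := add_le_add h3 hinit2
    simpa using this
  have hG'b : ∀ w ∈ ball x₀ R,
      ‖ContinuousLinearMap.id ℝ X - A.comp (F' w)‖ ≤ 1 + h1 ‖w - x₀‖ := by
    intro w hw
    have hw' := hw
    rw [mem_ball, dist_eq_norm] at hw'
    have := halley_aux_growth (fun w => A.comp (F' w))
      (fun w => (ContinuousLinearMap.compL ℝ X Y X A).comp (F'' w)) x₀ R h1 h2
      (fun w hw => (ContinuousLinearMap.compL ℝ X Y X A).hasFDerivAt.comp w (hdF' w (hballD hw)))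
      hd2 hA2b.monotoneOn hF''b w x₀ 0 ‖w - x₀‖ le_rfl (by simp) (by simp) hw'
    rw [hAF', hA1c, norm_sub_rev] at this
    linarith
  have hGl : ∀ (u v : X) (a b : ℝ), 0 ≤ a → ‖v - x₀‖ ≤ a → ‖u - v‖ ≤ b - a → b < R →
      ‖G u - G v‖ ≤ g b - g a := by
    intro u v a b ha hva huv hbR
    exact halley_aux_growth G (fun w => ContinuousLinearMap.id ℝ X - A.comp (F' w)) x₀ R g
      (fun s => 1 + h1 s)
      (fun w hw => (hasFDerivAt_id w).sub (A.hasFDerivAt.comp w (hdF w (hballD hw))))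
      hgd hg1 hG'b u v a b ha hva huv hbR
  have hGy : G y = y := by simp [G, hFy]
  have hGxs : G xs = xs := by simp [G, hzero]
  have hgt : g tstar = tstar := by simp [g, htszero]
  -- sequences
  let z : ℕ → X := fun n => G^[n] x₀
  let t : ℕ → ℝ := fun n => g^[n] 0
  let s : ℕ → ℝ := fun n => g^[n] s0
  have hz1 : ∀ n, z (n + 1) = G (z n) := fun n => Function.iterate_succ_apply' G n x₀
  have ht1 : ∀ n, t (n + 1) = g (t n) := fun n => Function.iterate_succ_apply' g n 0
  have hs1 : ∀ n, s (n + 1) = g (s n) := fun n => Function.iterate_succ_apply' g n s0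
  have htI : ∀ n, (0 ≤ t n ∧ t n ≤ tstar) ∧ t n ≤ t (n + 1) := by
    intro n
    induction n with
    | zero =>
      refine ⟨⟨le_rfl, ht0.le⟩, ?_⟩
      rw [ht1]
      simp only [t, g, Function.iterate_zero, id]
      linarith
    | succ n ih =>
      obtain ⟨⟨i1, i2⟩, i3⟩ := ih
      have i4 : t (n + 1) ≤ tstar := by
        rw [ht1, ← hgt]
        exact hgmono ⟨i1, i2.trans_lt htsmem.2⟩ ⟨ht0.le, htsmem.2⟩ i2
      refine ⟨⟨i1.trans i3, i4⟩, ?_⟩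
      rw [ht1 (n + 1)]
      nth_rewrite 1 [ht1 n]
      exact hgmono ⟨i1, i2.trans_lt htsmem.2⟩ ⟨i1.trans i3, i4.trans_lt htsmem.2⟩ i3
  have hsI : ∀ n, (tstar ≤ s n ∧ s n ≤ s0) ∧ s (n + 1) ≤ s n := by
    intro n
    induction n with
    | zero =>
      refine ⟨⟨hts0.le, le_rfl⟩, ?_⟩
      rw [hs1]
      simp only [s, g, Function.iterate_zero, id]
      linarith
    | succ n ih =>
      obtain ⟨⟨i1, i2⟩, i3⟩ := ih
      have m1 : s n ∈ Ico (0:ℝ) R := ⟨ht0.le.trans i1, i2.trans_lt hs0R⟩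
      have i4 : tstar ≤ s (n + 1) := by
        rw [hs1]
        calc tstar = g tstar := hgt.symm
          _ ≤ _ := hgmono ⟨ht0.le, htsmem.2⟩ m1 i1
      refine ⟨⟨i4, i3.trans i2⟩, ?_⟩
      rw [hs1 (n + 1)]
      nth_rewrite 2 [hs1 n]
      exact hgmono ⟨ht0.le.trans i4, (i3.trans i2).trans_lt hs0R⟩ m1 i3
  have hzI : ∀ n, ‖z n - x₀‖ ≤ t n := by
    intro n
    induction n with
    | zero => simp [z, t]
    | succ n ih =>
      have h3 := hGl (z n) x₀ 0 (t n) le_rfl (by simp) (by simpa using ih)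
        ((htI n).1.2.trans_lt htsmem.2)
      have h4 : ‖G x₀ - x₀‖ ≤ h 0 := by simpa [G, A] using hinit1
      have h5 : g 0 = h 0 := by simp [g]
      rw [hz1, ht1]
      calc ‖G (z n) - x₀‖ = ‖(G (z n) - G x₀) + (G x₀ - x₀)‖ := by congr 1; abel
        _ ≤ _ := norm_add_le _ _
        _ ≤ g (t n) := by linarith
  have hfix : ∀ w, G w = w → ‖w - x₀‖ ≤ s0 → ∀ n, ‖w - z n‖ ≤ s n - t n := by
    intro w hw hw0 n
    induction n with
    | zero => simpa [z, s, t] using hw0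
    | succ n ih =>
      have h3 := hGl w (z n) (t n) (s n) (htI n).1.1 (hzI n) ih ((hsI n).1.2.trans_lt hs0R)
      rw [hw] at h3
      rw [hz1, hs1, ht1]
      exact h3
  -- limits
  have hcg : ∀ (q : ℕ → ℝ) (L : ℝ), (∀ n, q (n + 1) = g (q n)) → (∀ n, q n ∈ Ico (0:ℝ) R) →
      L ∈ Ico (0:ℝ) R → Filter.Tendsto q Filter.atTop (nhds L) → h L = 0 := by
    intro q L hq hqI hL hqL
    have c1 : Filter.Tendsto (fun n => g (q n)) Filter.atTop (nhds (g L)) :=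
      (hgd L hL).continuousWithinAt.tendsto.comp
        (tendsto_nhdsWithin_iff.2 ⟨hqL, Filter.Eventually.of_forall hqI⟩)
    have c2 : Filter.Tendsto (fun n => q (n + 1)) Filter.atTop (nhds L) :=
      hqL.comp (Filter.tendsto_add_atTop_nat 1)
    simp only [hq] at c2
    have c3 := tendsto_nhds_unique c1 c2
    simp only [g] at c3
    linarith
  have htlim : Filter.Tendsto t Filter.atTop (nhds tstar) := by
    have hmon : Monotone t := monotone_nat_of_le_succ fun n => (htI n).2
    have hbd : BddAbove (range t) := ⟨tstar, by rintro _ ⟨n, rfl⟩; exact (htI n).1.2⟩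
    have hT := tendsto_atTop_ciSup hmon hbd
    set T := ⨆ n, t n
    have hT1 : T ≤ tstar := le_of_tendsto' hT fun n => (htI n).1.2
    have hT0 : 0 ≤ T := ge_of_tendsto' hT fun n => (htI n).1.1
    have hz := hcg t T ht1 (fun n => ⟨(htI n).1.1, (htI n).1.2.trans_lt htsmem.2⟩)
      ⟨hT0, hT1.trans_lt htsmem.2⟩ hT
    have hTne : 0 < T := by
      rcases hT0.eq_or_lt with h' | h'
      · rw [← h'] at hz; linarith
      · exact h'
    have : T = tstar := le_antisymm hT1 (htsmin T ⟨hTne, hT1.trans_lt htsmem.2⟩ hz)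
    rwa [this] at hT
  have hslim : Filter.Tendsto s Filter.atTop (nhds tstar) := by
    have hmon : Antitone s := antitone_nat_of_succ_le fun n => (hsI n).2
    have hbd : BddBelow (range s) := ⟨tstar, by rintro _ ⟨n, rfl⟩; exact (hsI n).1.1⟩
    have hT := tendsto_atTop_ciInf hmon hbd
    set T := ⨅ n, s n
    have hT1 : T ≤ s0 := le_of_tendsto' hT fun n => (hsI n).1.2
    have hT0 : tstar ≤ T := ge_of_tendsto' hT fun n => (hsI n).1.1
    have hz := hcg s T hs1 (fun n => ⟨ht0.le.trans (hsI n).1.1, (hsI n).1.2.trans_lt hs0R⟩)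
      ⟨ht0.le.trans hT0, hT1.trans_lt hs0R⟩ hT
    have : T = tstar := by
      by_contra hne
      have l1 : tstar < T := lt_of_le_of_ne hT0 (Ne.symm hne)
      have l2 : T < s0 := lt_of_le_of_ne hT1 (fun h' => by rw [h'] at hz; linarith)
      have := hneg tstar ⟨ht0.le, htsmem.2⟩ s0 ⟨by linarith, hs0R⟩ T l1 l2 htszero.le hhs0.le
        (Or.inr hhs0)
      linarith
    rwa [this] at hT
  have hst : Filter.Tendsto (fun n => (s n - t n) + (s n - t n)) Filter.atTop (nhds 0) := by
    have := (hslim.sub htlim).add (hslim.sub htlim)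
    simpa using this
  have hfin : ‖y - xs‖ ≤ 0 := by
    refine ge_of_tendsto' hst fun n => ?_
    have f1 := hfix y hGy hys0 n
    have f2 := hfix xs hGxs (hxs'.trans hts0.le) n
    calc ‖y - xs‖ = ‖(y - z n) - (xs - z n)‖ := by congr 1; abel
      _ ≤ _ := norm_sub_le _ _
      _ ≤ _ := add_le_add f1 f2
  exact sub_eq_zero.1 (norm_le_zero_iff.1 hfin)
end

section
/- Let X, Y be Banach spaces, D ⊂ X open and convex, F : D → Y twice continuously Fréchet differentiable, x₀ ∈ D with F'(x₀) invertible. Suppose the affine covariant Lipschitz condition ‖F'(x₀)⁻¹[F''(y) − F''(x)]‖ ≤ L‖y − x‖ holds for all x, y ∈ D, and ‖F'(x₀)⁻¹F(x₀)‖ ≤ β, ‖F'(x₀)⁻¹F''(x₀)‖ ≤ η. If β < b := 2(η + 2√(η² + 2L)) / (3(η + √(η² + 2L))²), then: the Halley sequence (x_k) starting at x₀ is well defined, contained in B(x₀,t*), and converges to a point x* in the closed ball of radius t* about x₀ with F(x*) = 0, where t* is the smallest positive root of f(t) = β − t + (η/2)t² + (L/6)t³ in [0,r₁] with r₁ = 2/(η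 + √(η² + 2L)) the positive root of f'; x* is the unique zero of F in B(x₀,t**), where t** is the root of f in [r₁,∞); the error bound ‖x* − x_{k+1}‖ ≤ (t* − t_{k+1})·(‖x* − x_k‖/(t* − t_k))³ holds for all k, where (t_k) is the majorizing sequence for f; and ‖x* − x_{k+1}‖ ≤ [ (3(η + Lt*)² + 2L(1 − ηt* − Lt*²/2)) / (9(1 − ηt* − Lt*²/2)²) ]·‖x* − x_k‖³ for all k. -/
open Metric Set

lemma hk_inv {X : Type*} [NormedAddCommGroup X] [NormedSpace ℝ X] [CompleteSpace X]
    (A : X →L[ℝ] X) (c : ℝ) (hc0 : 0 ≤ c) (hc : c < 1) (h : ∀ v, ‖v - A v‖ ≤ c * ‖v‖) :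
    ∃ T : X ≃L[ℝ] X, (T : X →L[ℝ] X) = A ∧ ∀ w, ‖T.symm w‖ ≤ ‖w‖ / (1 - c) := by
  have h1 : ‖(1 : X →L[ℝ] X) - A‖ < 1 := by
    refine lt_of_le_of_lt (ContinuousLinearMap.opNorm_le_bound _ hc0 ?_) hc
    intro v
    simpa using h v
  let T := ContinuousLinearEquiv.ofUnit (Units.oneSub ((1 : X →L[ℝ] X) - A) h1)
  have hT : (T : X →L[ℝ] X) = A := by
    have : (T : X →L[ℝ] X) = 1 - (1 - A) := rfl
    rw [this]; abel
  refine ⟨T, hT, ?_⟩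
  intro w
  have h2 := h (T.symm w)
  have h3 : A (T.symm w) = w := by
    rw [← hT]; simp
  rw [h3] at h2
  have h4 := norm_sub_norm_le (T.symm w) w
  rw [le_div_iff₀ (by linarith)]
  linarith

lemma hk_mvt {E : Type*} [NormedAddCommGroup E] [NormedSpace ℝ E]
    (φ φ' : ℝ → E) (B B' : ℝ → ℝ) (hφ : ∀ s ∈ Icc (0:ℝ) 1, HasDerivAt φ (φ' s) s)
    (hB : ∀ s, HasDerivAt B (B' s) s) (h : ∀ s ∈ Icc (0:ℝ) 1, ‖φ' s‖ ≤ B' s) :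
    ‖φ 1 - φ 0‖ ≤ B 1 - B 0 := by
  have := image_norm_le_of_norm_deriv_right_le_deriv_boundary (a := 0) (b := 1)
    (f := fun s => φ s - φ 0) (f' := φ') (B := fun s => B s - B 0) (B' := B')
    (fun s hs => ((hφ s hs).continuousAt.sub continuousAt_const).continuousWithinAt)
    (fun s hs => ((hφ s (Ico_subset_Icc_self hs)).sub_const _).hasDerivWithinAt)
    (by simp) (fun s => (hB s).sub_const _) (fun s hs => h s (Ico_subset_Icc_self hs))
  exact this (right_mem_Icc.2 zero_le_one)

section
variable {X : Type*} [NormedAddCommGroup X] [NormedSpace ℝ X]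

lemma hk_line (D : Set X) (hD : Convex ℝ D) {x y : X} (hx : x ∈ D) (hy : y ∈ D) {s : ℝ}
    (hs : s ∈ Icc (0:ℝ) 1) : x + s • (y - x) ∈ D :=
  hD.add_smul_sub_mem hx hy hs

lemma hk_linederiv (x h : X) (s : ℝ) : HasDerivAt (fun s : ℝ => x + s • h) h s := by
  simpa using ((hasDerivAt_id s).smul_const h).const_add x

lemma hk_taylor1 (D : Set X) (hD : Convex ℝ D) (g' : X → X →L[ℝ] X)
    (g'' : X → X →L[ℝ] X →L[ℝ] X) (hg' : ∀ x ∈ D, HasFDerivAt g' (g'' x) x) (L : ℝ)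
    (hlip : ∀ x ∈ D, ∀ y ∈ D, ‖g'' y - g'' x‖ ≤ L * ‖y - x‖)
    {x y : X} (hx : x ∈ D) (hy : y ∈ D) :
    ‖g' y - g' x - g'' x (y - x)‖ ≤ L / 2 * ‖y - x‖ ^ 2 := by
  set h := y - x with hh
  have key := hk_mvt (fun s : ℝ => g' (x + s • h) - s • g'' x h)
    (fun s => g'' (x + s • h) h - g'' x h)
    (fun s => L / 2 * ‖h‖ ^ 2 * s ^ 2) (fun s => L * ‖h‖ ^ 2 * s) ?_ ?_ ?_
  · have e1 : x + (1:ℝ) • h = y := by simp [hh]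
    simp only [e1] at key
    simp only [zero_smul, one_smul, add_zero, sub_zero] at key
    convert key using 1
    · congr 1; abel
    · ring
  · intro s hs
    have h1 := (hg' _ (hk_line D hD hx hy hs)).comp_hasDerivAt s (hk_linederiv x h s)
    have h2 := (hasDerivAt_id s).smul_const (g'' x h)
    simp only [one_smul] at h2
    exact h1.sub h2
  · intro s
    exact ((hasDerivAt_pow 2 s).const_mul (L / 2 * ‖h‖ ^ 2)).congr_deriv (by norm_num; ring)
  · intro s hs
    have h1 := hlip x hx _ (hk_line D hD hx hy hs)
    rw [← sub_apply]
    refine (ContinuousLinearMap.le_opNorm _ _).trans ?_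
    have h2 : ‖x + s • (y - x) - x‖ = s * ‖h‖ := by
      rw [add_sub_cancel_left, norm_smul, Real.norm_of_nonneg hs.1]
    rw [h2] at h1
    calc _ ≤ L * (s * ‖h‖) * ‖h‖ := by gcongr
      _ = _ := by ring

lemma hk_taylor2 (D : Set X) (hD : Convex ℝ D) (g : X → X) (g' : X → X →L[ℝ] X)
    (g'' : X → X →L[ℝ] X →L[ℝ] X) (hg : ∀ x ∈ D, HasFDerivAt g (g' x) x)
    (hg' : ∀ x ∈ D, HasFDerivAt g' (g'' x) x) (L : ℝ)
    (hlip : ∀ x ∈ D, ∀ y ∈ D, ‖g'' y - g'' x‖ ≤ L * ‖y - x‖)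
    {x y : X} (hx : x ∈ D) (hy : y ∈ D) :
    ‖g y - g x - g' x (y - x) - (2⁻¹ : ℝ) • g'' x (y - x) (y - x)‖ ≤ L / 6 * ‖y - x‖ ^ 3 := by
  set h := y - x with hh
  have key := hk_mvt (fun s : ℝ => g (x + s • h) - s • g' x h - (s ^ 2 / 2) • g'' x h h)
    (fun s => g' (x + s • h) h - g' x h - s • g'' x h h)
    (fun s => L / 6 * ‖h‖ ^ 3 * s ^ 3) (fun s => L / 2 * ‖h‖ ^ 3 * s ^ 2) ?_ ?_ ?_
  · have e1 : x + (1:ℝ) • h = y := by simp [hh]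
    simp only [e1] at key
    norm_num at key
    convert key using 1
    congr 1
    have : (1 / 2 : ℝ) = 2⁻¹ := by norm_num
    simp only [this]
    abel
  · intro s hs
    have h1 := (hg _ (hk_line D hD hx hy hs)).comp_hasDerivAt s (hk_linederiv x h s)
    have h2 := (hasDerivAt_id s).smul_const (g' x h)
    simp only [one_smul] at h2
    have h3 : HasDerivAt (fun s : ℝ => s ^ 2 / 2) s s := by
      exact ((hasDerivAt_pow 2 s).div_const 2).congr_deriv (by norm_num)
    exact (h1.sub h2).sub (h3.smul_const _)
  · intro s
    exact ((hasDerivAt_pow 3 s).const_mul (L / 6 * ‖h‖ ^ 3)).congr_deriv (by norm_num; ring)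
  · intro s hs
    have h1 := hk_taylor1 D hD g' g'' hg' L hlip hx (hk_line D hD hx hy hs)
    rw [add_sub_cancel_left, norm_smul, Real.norm_of_nonneg hs.1] at h1
    have e : g' (x + s • h) h - g' x h - s • g'' x h h
      = (g' (x + s • h) - g' x - g'' x (s • h)) h := by simp
    rw [e]
    refine (ContinuousLinearMap.le_opNorm _ _).trans ?_
    calc _ ≤ L / 2 * (s * ‖h‖) ^ 2 * ‖h‖ := by gcongr
      _ = _ := by ring
end

set_option maxHeartbeats 1000000 in
/-- scalar step -/
lemma hk_scalar (L β η : ℝ) (hL : 0 < L) (hη : 0 < η) (a : ℝ)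
    (ha : β - a + η / 2 * a ^ 2 + L / 6 * a ^ 3 = 0) (hpa : η * a + L / 2 * a ^ 2 < 1)
    (t : ℝ) (ht0 : 0 ≤ t) (hta : t < a) (φ p q l s : ℝ)
    (hφ : φ = β - t + η / 2 * t ^ 2 + L / 6 * t ^ 3)
    (hp : p = 1 - η * t - L / 2 * t ^ 2) (hq : q = η + L * t)
    (hl : l = φ * q / (2 * p ^ 2)) (hs : s = (1 / (1 - l)) * (φ / p)) :
    0 < φ ∧ 0 < p ∧ p ≤ 1 ∧ 0 < q ∧ 0 ≤ l ∧ l ≤ 1 / 4 ∧ φ ≤ s ∧ t + s < a ∧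
    β - (t + s) + η / 2 * (t + s) ^ 2 + L / 6 * (t + s) ^ 3 = q / 2 * l * s ^ 2 + L / 6 * s ^ 3 ∧
    a - (t + s) = (a - t) ^ 3 / (1 - l) *
      (L / (6 * p) + q ^ 2 / (4 * p ^ 2) + L * q * (a - t) / (12 * p ^ 2)) ∧
    1 / (1 - l) * (L / (6 * p) + q ^ 2 / (4 * p ^ 2) + L * q * (a - t) / (12 * p ^ 2)) ≤
      (3 * (η + L * a) ^ 2 + 2 * L * (1 - η * a - L * a ^ 2 / 2)) /
            (9 * (1 - η * a - L * a ^ 2 / 2) ^ 2) := by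
  obtain ⟨d, rfl⟩ : ∃ d, a = t + d := ⟨a - t, by ring⟩
  have hd : 0 < d := by linarith
  have hq0 : 0 < q := by rw [hq]; positivity
  set P := 1 - η * (t + d) - L * (t + d) ^ 2 / 2 with hP
  have hP0 : 0 < P := by rw [hP]; linarith
  have hpP : p = P + q * d + L / 2 * d ^ 2 := by rw [hP, hp, hq]; ring
  have hp0 : 0 < p := by rw [hpP]; positivity
  have hφ1 : φ = P * d + q / 2 * d ^ 2 + L / 3 * d ^ 3 := by
    rw [hφ, hP, hq]; linear_combination ha
  have hφ2 : φ = p * d - q / 2 * d ^ 2 - L / 6 * d ^ 3 := by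
    rw [hφ1, hpP]; ring
  have hφ0 : 0 < φ := by rw [hφ1]; positivity
  have hp1 : p ≤ 1 := by rw [hp]; have := mul_nonneg hη.le ht0; have := mul_nonneg hL.le (sq_nonneg t); linarith
  have hl0 : 0 ≤ l := by rw [hl]; positivity
  have hl4 : l ≤ 1 / 4 := by
    rw [hl, div_le_iff₀ (by positivity), hφ2]
    have : 0 ≤ L * d ^ 3 * q := by positivity
    nlinarith [sq_nonneg (p - q * d)]
  have h1l : 0 < 1 - l := by linarith
  have hlp : 2 * p ^ 2 * l = φ * q := by rw [hl]; field_simp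
  have hsp : p * (1 - l) * s = φ := by rw [hs]; field_simp
  have hs0 : 0 < s := by rw [hs]; positivity
  have herr : t + d - (t + s) = (t + d - t) ^ 3 / (1 - l) *
      (L / (6 * p) + q ^ 2 / (4 * p ^ 2) + L * q * (t + d - t) / (12 * p ^ 2)) := by
    have e : (t + d - t) ^ 3 / (1 - l) *
      (L / (6 * p) + q ^ 2 / (4 * p ^ 2) + L * q * (t + d - t) / (12 * p ^ 2))
      = d ^ 3 * (2 * p * L + 3 * q ^ 2 + L * q * d) / (12 * p ^ 2 * (1 - l)) := by
      field_simp; ring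
    rw [e, eq_div_iff (by positivity)]
    have : (t + d - (t + s)) * (12 * p ^ 2 * (1 - l))
      = 12 * p ^ 2 * d - 6 * d * (2 * p ^ 2 * l) - 12 * p * (p * (1 - l) * s) := by ring
    rw [this, hlp, hsp, hφ2]; ring
  refine ⟨hφ0, hp0, hp1, hq0, hl0, hl4, ?_, ?_, ?_, herr, ?_⟩
  · have : p * (1 - l) ≤ 1 := mul_le_one₀ hp1 h1l.le (by linarith)
    have := mul_le_mul_of_nonneg_right this hs0.le
    linarith
  · have : 0 < t + d - (t + s) := by rw [herr]; simp only [add_sub_cancel_left]; positivity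
    linarith
  · have e : β - (t + s) + η / 2 * (t + s) ^ 2 + L / 6 * (t + s) ^ 3
       = φ - p * s + q / 2 * s ^ 2 + L / 6 * s ^ 3 := by rw [hφ, hp, hq]; ring
    have e2 : p * (φ - p * s + q / 2 * s ^ 2 - q / 2 * l * s ^ 2) = 0 := by
      linear_combination (q * s / 2 - p) * hsp - (s / 2) * hlp
    have e3 := (mul_eq_zero.1 e2).resolve_left hp0.ne'
    rw [e]; linear_combination e3
  · have hPp : P ≤ p := by rw [hpP]; have := mul_pos hq0 hd; have := mul_pos hL (sq_pos_of_pos hd); linarith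
    have h43 : 1 / (1 - l) ≤ 4 / 3 := by
      rw [div_le_div_iff₀ h1l (by norm_num)]; linarith
    have hQ : η + L * (t + d) = q + L * d := by rw [hq]; ring
    rw [hQ]; simp only [add_sub_cancel_left]
    have hLd : 0 < L * d := by positivity
    calc _ ≤ 4 / 3 * (L / (6 * p) + q ^ 2 / (4 * p ^ 2) + L * q * d / (12 * p ^ 2)) := by
          gcongr
      _ = 2 * L / (9 * p) + (3 * q ^ 2 + q * (L * d)) / (9 * p ^ 2) := by field_simp; ring
      _ ≤ 2 * L / (9 * P) + (3 * (q + L * d) ^ 2) / (9 * P ^ 2) := by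
          gcongr
          nlinarith
      _ = _ := by field_simp; ring

lemma hk_bd {X : Type*} [NormedAddCommGroup X] [NormedSpace ℝ X]
    (D : Set X) (hD : Convex ℝ D) (g' : X → X →L[ℝ] X)
    (g'' : X → X →L[ℝ] X →L[ℝ] X) 
    (hg' : ∀ x ∈ D, HasFDerivAt g' (g'' x) x) (L η : ℝ)
    (hlip : ∀ x ∈ D, ∀ y ∈ D, ‖g'' y - g'' x‖ ≤ L * ‖y - x‖)
    (x₀ : X) (hx₀ : x₀ ∈ D) (hid : g' x₀ = ContinuousLinearMap.id ℝ X) (hη : ‖g'' x₀‖ ≤ η)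
    {x : X} (hx : x ∈ D) :
    ‖g'' x‖ ≤ η + L * ‖x - x₀‖ ∧
    ∀ v, ‖v - g' x v‖ ≤ (η * ‖x - x₀‖ + L / 2 * ‖x - x₀‖ ^ 2) * ‖v‖ := by
  constructor
  · have h1 := hlip x₀ hx₀ x hx
    have h2 := norm_sub_norm_le (g'' x) (g'' x₀)
    linarith
  · intro v
    have h1 := hk_taylor1 D hD g' g'' hg' L hlip hx₀ hx
    have h2 : ‖g'' x₀ (x - x₀)‖ ≤ η * ‖x - x₀‖ :=
      (ContinuousLinearMap.le_opNorm _ _).trans (by gcongr)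
    have h3 : ‖g' x - g' x₀‖ ≤ η * ‖x - x₀‖ + L / 2 * ‖x - x₀‖ ^ 2 := by
      have := norm_sub_norm_le (g' x - g' x₀) (g'' x₀ (x - x₀))
      linarith
    have h4 : v - g' x v = - ((g' x - g' x₀) v) := by rw [hid]; simp
    rw [h4, norm_neg]
    exact (ContinuousLinearMap.le_opNorm _ _).trans (by gcongr)

set_option maxHeartbeats 1000000 in
lemma hk_step {X : Type*} [NormedAddCommGroup X] [NormedSpace ℝ X] [CompleteSpace X]
    (D : Set X) (hD : Convex ℝ D) (g : X → X) (g' : X → X →L[ℝ] X)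
    (g'' : X → X →L[ℝ] X →L[ℝ] X) (hg : ∀ x ∈ D, HasFDerivAt g (g' x) x)
    (hg' : ∀ x ∈ D, HasFDerivAt g' (g'' x) x) (L η : ℝ) (hL : 0 < L) (hη0 : 0 < η)
    (hlip : ∀ x ∈ D, ∀ y ∈ D, ‖g'' y - g'' x‖ ≤ L * ‖y - x‖)
    (x₀ : X) (hx₀ : x₀ ∈ D) (hid : g' x₀ = ContinuousLinearMap.id ℝ X) (hη : ‖g'' x₀‖ ≤ η)
    {x : X} (hx : x ∈ D) (t : ℝ) (hxt : ‖x - x₀‖ ≤ t) (φ p q l s : ℝ)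
    (hp : p = 1 - η * t - L / 2 * t ^ 2) (hp0 : 0 < p) (hq : q = η + L * t) (hφ : ‖g x‖ ≤ φ)
    (hl : l = φ * q / (2 * p ^ 2)) (hl1 : l < 1) (hs : s = (1 / (1 - l)) * (φ / p)) :
    ∃ (T M : X ≃L[ℝ] X) (h : X), (T : X →L[ℝ] X) = g' x ∧
      (M : X →L[ℝ] X) = ContinuousLinearMap.id ℝ X -
        (2⁻¹ : ℝ) • ((T.symm : X →L[ℝ] X).comp (g'' x (T.symm (g x)))) ∧
      h = - (M.symm (T.symm (g x))) ∧ ‖h‖ ≤ s ∧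
      (x + h ∈ D → ‖g (x + h)‖ ≤ q / 2 * l * s ^ 2 + L / 6 * s ^ 3) ∧
      ∀ z ∈ D, g z = 0 → ‖z - (x + h)‖ ≤ 1 / (1 - l) *
        (L / (6 * p) + q ^ 2 / (4 * p ^ 2) + L * q * ‖z - x‖ / (12 * p ^ 2)) * ‖z - x‖ ^ 3 := by
  obtain ⟨hb2, hb1⟩ := hk_bd D hD g' g'' hg' L η hlip x₀ hx₀ hid hη hx
  have ht0 : 0 ≤ t := (norm_nonneg _).trans hxt
  have hφ0 : 0 ≤ φ := (norm_nonneg _).trans hφ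
  have hq0 : 0 < q := by rw [hq]; positivity
  have hl0 : 0 ≤ l := by rw [hl]; positivity
  have h1l : 0 < 1 - l := by linarith
  have hb2' : ‖g'' x‖ ≤ q := by rw [hq]; exact hb2.trans (by gcongr)
  obtain ⟨T, hT, hTb⟩ := hk_inv (g' x) (1 - p) (by rw [hp]; ring_nf; positivity) (by linarith) (by
    intro v
    refine (hb1 v).trans ?_
    have : 1 - p = η * t + L / 2 * t ^ 2 := by rw [hp]; ring
    rw [this]; gcongr)
  have hTb' : ∀ w, ‖T.symm w‖ ≤ ‖w‖ / p := by simpa using hTb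
  have hTT : ∀ w, g' x (T.symm w) = w := by intro w; rw [← hT]; simp
  have hTT' : ∀ w, T.symm (g' x w) = w := by intro w; rw [← hT]; simp
  set u := T.symm (g x) with hu
  have hub : ‖u‖ ≤ φ / p := (hTb' _).trans (by gcongr)
  have hbil : ∀ v w, ‖g'' x v w‖ ≤ q * ‖v‖ * ‖w‖ := fun v w =>
    (ContinuousLinearMap.le_opNorm₂ _ _ _).trans (by gcongr)
  set K : X →L[ℝ] X := (2⁻¹ : ℝ) • ((T.symm : X →L[ℝ] X).comp (g'' x u)) with hK
  have hKa : ∀ v, K v = (2⁻¹ : ℝ) • T.symm (g'' x u v) := fun v => rfl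
  have hKb : ∀ v, ‖K v‖ ≤ l * ‖v‖ := by
    intro v
    rw [hKa, norm_smul]
    have h1 : ‖T.symm (g'' x u v)‖ ≤ q * (φ / p) * ‖v‖ / p :=
      (hTb' _).trans (by gcongr; exact (hbil _ _).trans (by gcongr))
    calc _ ≤ ‖(2⁻¹:ℝ)‖ * (q * (φ / p) * ‖v‖ / p) := by gcongr
      _ = _ := by rw [hl]; norm_num; field_simp
  obtain ⟨M, hM, hMb⟩ := hk_inv (ContinuousLinearMap.id ℝ X - K) l hl0 hl1 (by
    intro v; simpa using hKb v)
  have hMa : ∀ v, M v = v - K v := by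
    intro v
    have := congrArg (fun A : X →L[ℝ] X => A v) hM
    simpa using this
  obtain ⟨h, hh⟩ : ∃ h, h = -(M.symm u) := ⟨_, rfl⟩
  have hMh : h - K h = -u := by rw [← hMa, hh]; simp
  have hhs : ‖h‖ ≤ s := by
    rw [hh, norm_neg, hs]
    refine (hMb _).trans ?_
    rw [div_eq_inv_mul, one_div]
    gcongr
  have hgx : g x = g' x u := (hTT _).symm
  refine ⟨T, M, h, hT, hM, hh, hhs, ?_, ?_⟩
  · intro hxh
    have h1 := hk_taylor2 D hD g g' g'' hg hg' L hlip hx hxh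
    rw [add_sub_cancel_left] at h1
    have e3 : u + h = K h := by
      rw [sub_eq_iff_eq_add] at hMh; nth_rewrite 1 [hMh]; abel
    have e1 : g x + g' x h = (2⁻¹ : ℝ) • g'' x u h := by
      rw [hgx, ← map_add, e3, hKa, map_smul, hTT]
    have e4 : g (x + h) = (g (x + h) - g x - g' x h - (2⁻¹ : ℝ) • g'' x h h)
        + (2⁻¹ : ℝ) • g'' x (K h) h := by
      rw [← e3, map_add, add_apply, smul_add, ← e1]; abel
    rw [e4]
    refine (norm_add_le _ _).trans ?_
    have h2 : ‖(2⁻¹ : ℝ) • g'' x (K h) h‖ ≤ q / 2 * l * s ^ 2 := by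
      rw [norm_smul]
      have h3 : ‖g'' x (K h) h‖ ≤ q * (l * s) * s :=
        (hbil _ _).trans (by
          have hs0 : 0 ≤ s := (norm_nonneg _).trans hhs
          have := (hKb h).trans (mul_le_mul_of_nonneg_left hhs hl0)
          gcongr)
      calc _ ≤ ‖(2⁻¹:ℝ)‖ * (q * (l * s) * s) := by gcongr
        _ = _ := by norm_num; ring
    have h4 : L / 6 * ‖h‖ ^ 3 ≤ L / 6 * s ^ 3 := by gcongr
    linarith
  · intro z hz hgz
    have h1 := hk_taylor2 D hD g g' g'' hg hg' L hlip hx hz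
    set d := z - x with hd
    set R := g z - g x - g' x d - (2⁻¹ : ℝ) • g'' x d d with hR
    have e1 : z - (x + h) = d - h := by rw [hd]; abel
    have e2 : d + u = - T.symm ((2⁻¹ : ℝ) • g'' x d d + R) := by
      have : (2⁻¹ : ℝ) • g'' x d d + R = - (g' x (d + u)) := by
        rw [hR, hgz, map_add, ← hgx]; abel
      rw [this, map_neg, neg_neg, hTT']
    have hdu : ‖d + u‖ ≤ (q / 2 * ‖d‖ ^ 2 + L / 6 * ‖d‖ ^ 3) / p := by
      rw [e2, norm_neg]
      refine (hTb' _).trans ?_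
      gcongr
      refine (norm_add_le _ _).trans ?_
      gcongr
      rw [norm_smul]
      calc _ ≤ ‖(2⁻¹:ℝ)‖ * (q * ‖d‖ * ‖d‖) := by gcongr; exact hbil _ _
        _ = _ := by norm_num; ring
    have e3 : M (d - h) = - T.symm ((2⁻¹ : ℝ) • g'' x (d + u) d + R) := by
      rw [map_sub, hMa, hMa, hMh, hKa]
      have e4 : d - (2⁻¹ : ℝ) • T.symm (g'' x u d) - -u
        = (d + u) - (2⁻¹ : ℝ) • T.symm (g'' x u d) := by abel
      have e6 : g'' x (d + u) d = g'' x d d + g'' x u d := by rw [map_add, add_apply]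
      rw [e4, e6, e2]
      simp only [map_add, map_smul, smul_add]
      abel
    have e5 : d - h = M.symm (M (d - h)) := by simp
    rw [e1, e5, e3]
    refine (hMb _).trans ?_
    rw [norm_neg]
    have h6 : ‖T.symm ((2⁻¹ : ℝ) • g'' x (d + u) d + R)‖ ≤
       (q / 2 * ((q / 2 * ‖d‖ ^ 2 + L / 6 * ‖d‖ ^ 3) / p) * ‖d‖ + L / 6 * ‖d‖ ^ 3) / p := by
      refine (hTb' _).trans ?_
      gcongr
      refine (norm_add_le _ _).trans ?_
      gcongr
      rw [norm_smul]
      calc _ ≤ ‖(2⁻¹:ℝ)‖ * (q * ((q / 2 * ‖d‖ ^ 2 + L / 6 * ‖d‖ ^ 3) / p) * ‖d‖) := by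
            gcongr; exact (hbil _ _).trans (by gcongr)
        _ = _ := by norm_num; ring
    calc _ ≤ ((q / 2 * ((q / 2 * ‖d‖ ^ 2 + L / 6 * ‖d‖ ^ 3) / p) * ‖d‖ + L / 6 * ‖d‖ ^ 3) / p) / (1 - l) := by
          gcongr
      _ = _ := by field_simp; ring

lemma hk_uniq {X : Type*} [NormedAddCommGroup X] [NormedSpace ℝ X]
    (D : Set X) (hD : Convex ℝ D) (g : X → X) (g' : X → X →L[ℝ] X)
    (g'' : X → X →L[ℝ] X →L[ℝ] X) (hg : ∀ x ∈ D, HasFDerivAt g (g' x) x)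
    (hg' : ∀ x ∈ D, HasFDerivAt g' (g'' x) x) (L η : ℝ) (hL : 0 < L) (hη0 : 0 < η)
    (hlip : ∀ x ∈ D, ∀ y ∈ D, ‖g'' y - g'' x‖ ≤ L * ‖y - x‖)
    (x₀ : X) (hx₀ : x₀ ∈ D) (hid : g' x₀ = ContinuousLinearMap.id ℝ X) (hη : ‖g'' x₀‖ ≤ η)
    {y z : X} (hy : y ∈ D) (hz : z ∈ D) (hgy : g y = 0) (hgz : g z = 0) (a ρ : ℝ)
    (hza : ‖z - x₀‖ ≤ a) (hyρ : ‖y - x₀‖ ≤ ρ)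
    (hc : -1 + η / 2 * (a + ρ) + L / 6 * (a ^ 2 + a * ρ + ρ ^ 2) < 0) : y = z := by
  set h := z - y with hh
  have key := hk_mvt (fun s : ℝ => g (y + s • h) - s • h)
    (fun s => g' (y + s • h) h - h)
    (fun s => ‖h‖ * (η * (ρ * s - (ρ - a) * (s ^ 2 / 2)) +
      L / 2 * (ρ ^ 2 * s - 2 * ρ * (ρ - a) * (s ^ 2 / 2) + (ρ - a) ^ 2 * (s ^ 3 / 3))))
    (fun s => ‖h‖ * (η * (ρ - (ρ - a) * s) + L / 2 * (ρ - (ρ - a) * s) ^ 2)) ?_ ?_ ?_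
  · have e1 : y + (1:ℝ) • h = z := by simp [hh]
    simp only [e1] at key
    simp only [zero_smul, add_zero, hgy, hgz, sub_zero, one_smul, zero_sub, norm_neg] at key
    have : ‖h‖ * (-1 + η / 2 * (a + ρ) + L / 6 * (a ^ 2 + a * ρ + ρ ^ 2)) ≥ 0 := by
      linear_combination key
    by_contra hne
    have hpos : 0 < ‖h‖ := by
      rw [norm_pos_iff, hh, sub_ne_zero]; exact fun h => hne h.symm
    nlinarith
  · intro s hs
    have h1 := (hg _ (hk_line D hD hy hz hs)).comp_hasDerivAt s (hk_linederiv y h s)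
    have h2 := (hasDerivAt_id s).smul_const h
    simp only [one_smul] at h2
    exact h1.sub h2
  · intro s
    have h1 := hasDerivAt_id s
    have h2 := (hasDerivAt_pow 2 s).div_const 2
    have h3 := (hasDerivAt_pow 3 s).div_const 3
    exact ((((h1.const_mul ρ).sub (h2.const_mul (ρ - a))).const_mul η).add
      ((((h1.const_mul (ρ ^ 2)).sub (h2.const_mul (2 * ρ * (ρ - a)))).add
        (h3.const_mul ((ρ - a) ^ 2))).const_mul (L / 2))).const_mul ‖h‖ |>.congr_deriv
        (by simp only [Nat.cast_ofNat, Nat.add_one_sub_one, pow_one]; ring)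
  · intro s hs
    have hm := hk_line D hD hy hz hs
    obtain ⟨-, hb1⟩ := hk_bd D hD g' g'' hg' L η hlip x₀ hx₀ hid hη hm
    rw [norm_sub_rev]
    refine (hb1 h).trans ?_
    have h1 : ‖y + s • (z - y) - x₀‖ ≤ ρ - (ρ - a) * s := by
      have e : y + s • (z - y) - x₀ = (1 - s) • (y - x₀) + s • (z - x₀) := by
        module
      rw [e]
      refine (norm_add_le _ _).trans ?_
      rw [norm_smul, norm_smul, Real.norm_of_nonneg hs.1,
        Real.norm_of_nonneg (by linarith [hs.2])]
      have := mul_le_mul_of_nonneg_left hza hs.1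
      have := mul_le_mul_of_nonneg_left hyρ (by linarith [hs.2] : 0 ≤ 1 - s)
      linarith
    rw [mul_comm]
    gcongr

set_option maxHeartbeats 2000000 in
/-- Kantorovich-type convergence of Halley's method under the
affine covariant Lipschitz condition: if `‖F'(x₀)⁻¹[F''(y) - F''(x)]‖ ≤ L‖y - x‖`
on `D`, `‖F'(x₀)⁻¹F(x₀)‖ ≤ β`, `‖F'(x₀)⁻¹F''(x₀)‖ ≤ η` and
`β < b = 2(η + 2√(η² + 2L))/(3(η + √(η² + 2L))²)`, then the Halley sequence
starting at `x₀` is well defined, stays in `B(x₀,t*)` and converges to a zero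
`xs` of `F` in the closed ball of radius `t*`, unique in `B(x₀,t**)`, and the
error bounds hold, where `t*` is the smallest root of
`f(s) = β - s + (η/2)s² + (L/6)s³` in `[0,r₁]`, `r₁ = 2/(η + √(η² + 2L))` is the
positive root of `f'`, `t**` is the root of `f` in `[r₁,∞)`, and `(t_k)` is the
majorizing sequence generated by applying Halley's method to `f`. -/
theorem halley_method_kantorovich_lipschitz
    {X Y : Type*} [NormedAddCommGroup X] [NormedSpace ℝ X] [CompleteSpace X]
    [NormedAddCommGroup Y] [NormedSpace ℝ Y] [CompleteSpace Y]
    (D : Set X) (hD : IsOpen D) (hDconv : Convex ℝ D)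
    (F : X → Y) (F' : X → X →L[ℝ] Y) (F'' : X → X →L[ℝ] X →L[ℝ] Y)
    (hdF : ∀ x ∈ D, HasFDerivAt F (F' x) x)
    (hdF' : ∀ x ∈ D, HasFDerivAt F' (F'' x) x)
    (hcF'' : ContinuousOn F'' D)
    (x₀ : X) (hx₀ : x₀ ∈ D)
    (e0 : X ≃L[ℝ] Y) (he0 : (e0 : X →L[ℝ] Y) = F' x₀)
    (L β η : ℝ) (hL : 0 < L) (hβ : 0 < β) (hη : 0 < η)
    (hlip : ∀ x ∈ D, ∀ y ∈ D,
      ‖(ContinuousLinearMap.compL ℝ X Y X (e0.symm : Y →L[ℝ] X)).comp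
          (F'' y - F'' x)‖ ≤ L * ‖y - x‖)
    (hinit1 : ‖(e0.symm : Y →L[ℝ] X) (F x₀)‖ ≤ β)
    (hinit2 : ‖(ContinuousLinearMap.compL ℝ X Y X (e0.symm : Y →L[ℝ] X)).comp
        (F'' x₀)‖ ≤ η)
    (hcrit : β < 2 * (η + 2 * Real.sqrt (η ^ 2 + 2 * L)) /
        (3 * (η + Real.sqrt (η ^ 2 + 2 * L)) ^ 2))
    (f f1 f2 : ℝ → ℝ)
    (hf : ∀ s, f s = β - s + η / 2 * s ^ 2 + L / 6 * s ^ 3)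
    (hf1 : ∀ s, f1 s = -1 + η * s + L / 2 * s ^ 2)
    (hf2 : ∀ s, f2 s = η + L * s)
    (r1 : ℝ) (hr1 : r1 = 2 / (η + Real.sqrt (η ^ 2 + 2 * L)))
    (tstar : ℝ) (htsmem : tstar ∈ Icc 0 r1) (htszero : f tstar = 0)
    (htsmin : ∀ s ∈ Icc (0:ℝ) r1, f s = 0 → tstar ≤ s)
    (tstst : ℝ) (htssmem : tstst ∈ Ici r1) (htsszero : f tstst = 0)
    (hballD : ball x₀ tstst ⊆ D)
    (t : ℕ → ℝ) (ht0 : t 0 = 0)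
    (hrec : ∀ k, t (k + 1) =
      t k - (1 / (1 - f (t k) * f2 (t k) / (2 * (f1 (t k)) ^ 2))) * (f (t k) / f1 (t k))) :
    ∃ (x : ℕ → X) (e : ℕ → (X ≃L[ℝ] Y)) (m : ℕ → (X ≃L[ℝ] X)),
      x 0 = x₀ ∧
      (∀ k,
        ((e k : X →L[ℝ] Y) = F' (x k)) ∧
        ((m k : X →L[ℝ] X) = ContinuousLinearMap.id ℝ X -
          (2⁻¹ : ℝ) • (((e k).symm : Y →L[ℝ] X).comp
            ((F'' (x k)) ((e k).symm (F (x k)))))) ∧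
        (x (k + 1) = x k - (m k).symm ((e k).symm (F (x k))))) ∧
      (∀ k, x k ∈ ball x₀ tstar) ∧
      ∃ xs ∈ closedBall x₀ tstar,
        Filter.Tendsto x Filter.atTop (nhds xs) ∧ F xs = 0 ∧
        (∀ y ∈ ball x₀ tstst, F y = 0 → y = xs) ∧
        (∀ k, ‖xs - x (k + 1)‖ ≤
          (tstar - t (k + 1)) * (‖xs - x k‖ / (tstar - t k)) ^ 3) ∧
        (∀ k, ‖xs - x (k + 1)‖ ≤
          (3 * (η + L * tstar) ^ 2 + 2 * L * (1 - η * tstar - L * tstar ^ 2 / 2)) /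
            (9 * (1 - η * tstar - L * tstar ^ 2 / 2) ^ 2) * ‖xs - x k‖ ^ 3) := by
  -- scalar preliminaries
  set S := Real.sqrt (η ^ 2 + 2 * L) with hS
  have hS2 : S ^ 2 = η ^ 2 + 2 * L := Real.sq_sqrt (by positivity)
  have hS0 : 0 < S := Real.sqrt_pos.2 (by positivity)
  have hηS : 0 < η + S := by positivity
  have hr0 : 0 < r1 := by rw [hr1]; positivity
  have hr2 : r1 * (η + S) = 2 := by rw [hr1]; field_simp
  have hLr : L * r1 = S - η := by
    have : (η + S) * (L * r1 - (S - η)) = 0 := by linear_combination L * hr2 - hS2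
    have := (mul_eq_zero.1 this).resolve_left hηS.ne'
    linarith
  have hf1r : η * r1 + L / 2 * r1 ^ 2 = 1 := by
    linear_combination r1 / 2 * hLr + hr2 / 2
  have hfr : f r1 < 0 := by
    have e : 2 * (η + 2 * S) / (3 * (η + S) ^ 2) = r1 ^ 2 * (η + 2 * S) / 6 := by
      rw [hr1]; field_simp; ring
    rw [e] at hcrit
    rw [hf]
    have : r1 - η / 2 * r1 ^ 2 - L / 6 * r1 ^ 3 = r1 ^ 2 * (η + 2 * S) / 6 := by
      linear_combination (-r1 / 2) * hr2 - r1 ^ 2 / 6 * hLr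
    linarith
  have ha0 : 0 ≤ tstar := htsmem.1
  have har : tstar < r1 := lt_of_le_of_ne htsmem.2 (by
    intro h; rw [h] at htszero; linarith)
  have hrb : r1 < tstst := lt_of_le_of_ne htssmem (by
    intro h; rw [← h] at htsszero; linarith)
  have hapos : 0 < tstar := lt_of_le_of_ne ha0 (by
    intro h; rw [← h, hf] at htszero; simp at htszero; linarith)
  have hab : tstar < tstst := har.trans hrb
  have ha : β - tstar + η / 2 * tstar ^ 2 + L / 6 * tstar ^ 3 = 0 := by rw [← hf]; exact htszero
  have hb : β - tstst + η / 2 * tstst ^ 2 + L / 6 * tstst ^ 3 = 0 := by rw [← hf]; exact htsszero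
  have hpa : η * tstar + L / 2 * tstar ^ 2 < 1 := by
    rw [← hf1r]; gcongr
  have hsc := fun k (h0 : 0 ≤ t k) (h1 : t k < tstar) =>
    hk_scalar L β η hL hη tstar ha hpa (t k) h0 h1 (f (t k)) (- f1 (t k)) (f2 (t k))
      (f (t k) * f2 (t k) / (2 * (- f1 (t k)) ^ 2)) (t (k + 1) - t k) (hf _)
      (by rw [hf1]; ring) (hf2 _) rfl (by rw [hrec k, neg_sq, div_neg]; ring)
  have htk : ∀ k, 0 ≤ t k ∧ t k < tstar := by
    intro k
    induction k with
    | zero => rw [ht0]; exact ⟨le_rfl, hapos⟩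
    | succ k ih =>
      obtain ⟨h1, h2, h3, h4, h5, h6, h7, h8, -⟩ := hsc k ih.1 ih.2
      exact ⟨by linarith [ih.1], by linarith⟩
  replace hsc := fun k => hsc k (htk k).1 (htk k).2
  have htmono : Monotone t := monotone_nat_of_le_succ (fun k => by
    obtain ⟨h1, h2, h3, h4, h5, h6, h7, h8, -⟩ := hsc k
    linarith)
  -- transfer to X
  set A : (X →L[ℝ] Y) →L[ℝ] (X →L[ℝ] X) :=
    ContinuousLinearMap.compL ℝ X Y X (e0.symm : Y →L[ℝ] X) with hA
  obtain ⟨g, hgdef⟩ : ∃ g : X → X, g = fun x => e0.symm (F x) := ⟨_, rfl⟩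
  obtain ⟨g', hg'def⟩ : ∃ g' : X → X →L[ℝ] X, g' = fun x => A (F' x) := ⟨_, rfl⟩
  obtain ⟨g'', hg''def⟩ : ∃ g'' : X → X →L[ℝ] X →L[ℝ] X, g'' = fun x => A.comp (F'' x) :=
    ⟨_, rfl⟩
  have hg : ∀ x ∈ D, HasFDerivAt g (g' x) x := by
    intro x hx
    rw [hgdef, hg'def]
    exact ((e0.symm : Y →L[ℝ] X).hasFDerivAt (x := F x)).comp x (hdF x hx)
  have hg' : ∀ x ∈ D, HasFDerivAt g' (g'' x) x := by
    intro x hx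
    rw [hg'def, hg''def]
    exact (A.hasFDerivAt (x := F' x)).comp x (hdF' x hx)
  have hlip' : ∀ x ∈ D, ∀ y ∈ D, ‖g'' y - g'' x‖ ≤ L * ‖y - x‖ := by
    intro x hx y hy
    have := hlip x hx y hy
    rw [ContinuousLinearMap.comp_sub] at this
    rw [hg''def]; exact this
  have hid : g' x₀ = ContinuousLinearMap.id ℝ X := by
    rw [hg'def]
    ext v
    show A (F' x₀) v = v
    rw [← he0]
    exact e0.symm_apply_apply v
  have hη' : ‖g'' x₀‖ ≤ η := by rw [hg''def]; exact hinit2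
  have hg0 : ‖g x₀‖ ≤ β := by rw [hgdef]; exact hinit1
  have hinD : ∀ z, ‖z - x₀‖ ≤ tstar → z ∈ D := fun z hz =>
    hballD (mem_ball_iff_norm.2 (lt_of_le_of_lt hz hab))
  have hstep : ∀ k (x : {x : X // ‖x - x₀‖ ≤ t k ∧ ‖g x‖ ≤ f (t k)}),
      ∃ (x' : {x : X // ‖x - x₀‖ ≤ t (k + 1) ∧ ‖g x‖ ≤ f (t (k + 1))})
        (e : X ≃L[ℝ] Y) (m : X ≃L[ℝ] X),
        ((e : X →L[ℝ] Y) = F' x) ∧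
        ((m : X →L[ℝ] X) = ContinuousLinearMap.id ℝ X -
          (2⁻¹ : ℝ) • ((e.symm : Y →L[ℝ] X).comp ((F'' x) (e.symm (F x))))) ∧
        ((x' : X) = x - m.symm (e.symm (F x))) ∧
        ‖(x' : X) - x‖ ≤ t (k + 1) - t k ∧
        ∀ z ∈ D, g z = 0 → ‖z - x‖ ≤ tstar - t k →
          ‖z - x'‖ ≤ (tstar - t (k + 1)) * (‖z - x‖ / (tstar - t k)) ^ 3 ∧
          ‖z - x'‖ ≤ (3 * (η + L * tstar) ^ 2 + 2 * L * (1 - η * tstar - L * tstar ^ 2 / 2)) /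
            (9 * (1 - η * tstar - L * tstar ^ 2 / 2) ^ 2) * ‖z - x‖ ^ 3 := by
    rintro k ⟨x, hx1, hx2⟩
    obtain ⟨s1, s2, s3, s4, s5, s6, s7, s8, s9, s10, s11⟩ := hsc k
    obtain ⟨T, M, h, hT, hM, hh, hhs, hres, herr⟩ := hk_step D hDconv g g' g'' hg hg' L η hL hη
      hlip' x₀ hx₀ hid hη' (hinD x (hx1.trans (htk k).2.le)) (t k) hx1 (f (t k)) (- f1 (t k))
      (f2 (t k)) (f (t k) * f2 (t k) / (2 * (- f1 (t k)) ^ 2)) (t (k + 1) - t k)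
      (by rw [hf1]; ring) s2 (hf2 _) hx2 rfl (by linarith)
      (by rw [hrec k, neg_sq, div_neg]; ring)
    have hxh : ‖x + h - x₀‖ ≤ t (k + 1) := by
      have e : x + h - x₀ = (x - x₀) + h := by abel
      rw [e]
      refine (norm_add_le _ _).trans ?_
      linarith
    have hsymm : ∀ w, (T.trans e0).symm w = T.symm (e0.symm w) := fun w => rfl
    have hgx : T.symm (g x) = (T.trans e0).symm (F x) := by rw [hsymm, hgdef]
    refine ⟨⟨x + h, hxh, ?_⟩, T.trans e0, M, ?_, ?_, ?_, ?_, ?_⟩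
    · refine (hres (hinD _ (hxh.trans (htk (k + 1)).2.le))).trans ?_
      rw [← s9, add_sub_cancel, ← hf]
    · ext v
      have h1 : T v = g' x v := by rw [← hT]; rfl
      have h2 : g' x v = e0.symm (F' x v) := by rw [hg'def]; rfl
      show e0 (T v) = F' x v
      rw [h1, h2]; simp
    · rw [hM, ← hgx]
      congr 2
      ext v
      show T.symm (g'' x (T.symm (g x)) v) = T.symm (e0.symm (F'' x (T.symm (g x)) v))
      rw [hg''def]; rfl
    · show x + h = _
      rw [hh, hgx, sub_eq_add_neg]
    · simpa using hhs
    · intro z hz hgz hzx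
      have he := herr z hz hgz
      set l := f (t k) * f2 (t k) / (2 * (- f1 (t k)) ^ 2) with hl
      have h1l : 0 < 1 - l := by linarith
      have hta : 0 < tstar - t k := by linarith [(htk k).2]
      have hmain : ‖z - (x + h)‖ ≤ 1 / (1 - l) *
        (L / (6 * -f1 (t k)) + f2 (t k) ^ 2 / (4 * (-f1 (t k)) ^ 2) +
          L * f2 (t k) * (tstar - t k) / (12 * (-f1 (t k)) ^ 2)) * ‖z - x‖ ^ 3 := by
        refine he.trans ?_
        gcongr
      constructor
      · refine hmain.trans (le_of_eq ?_)
        rw [add_sub_cancel] at s10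
        rw [s10, div_pow]
        generalize (L / (6 * -f1 (t k)) + f2 (t k) ^ 2 / (4 * (-f1 (t k)) ^ 2) +
          L * f2 (t k) * (tstar - t k) / (12 * (-f1 (t k)) ^ 2)) = C
        field_simp
      · refine hmain.trans ?_
        gcongr
  choose nx ne nm hn1 hn2 hn3 hn4 hn5 using hstep
  let sq : ∀ k, {x : X // ‖x - x₀‖ ≤ t k ∧ ‖g x‖ ≤ f (t k)} := fun k =>
    Nat.rec (motive := fun k => {x : X // ‖x - x₀‖ ≤ t k ∧ ‖g x‖ ≤ f (t k)})
      ⟨x₀, by simp [ht0], by rw [ht0, hf]; simpa using hg0⟩ (fun k x => nx k x) k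
  have hsq : ∀ k, sq (k + 1) = nx k (sq k) := fun k => rfl
  obtain ⟨x, hxdef⟩ : ∃ x : ℕ → X, ∀ k, x k = (sq k).1 := ⟨fun k => (sq k).1, fun _ => rfl⟩
  have hxk : ∀ k, (sq k).1 = x k := fun k => (hxdef k).symm
  have hxk1 : ∀ k, (nx k (sq k)).1 = x (k + 1) := fun k => (hxdef (k + 1)).symm
  have hball : ∀ k, ‖x k - x₀‖ ≤ t k := fun k => by rw [← hxk]; exact (sq k).2.1
  have hres : ∀ k, ‖g (x k)‖ ≤ f (t k) := fun k => by rw [← hxk]; exact (sq k).2.2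
  have hdist : ∀ k, ‖x (k + 1) - x k‖ ≤ t (k + 1) - t k := fun k => by
    have := hn4 k (sq k); rwa [hxk1, hxk] at this
  have hdist2 : ∀ k n, ‖x (k + n) - x k‖ ≤ t (k + n) - t k := by
    intro k n
    induction n with
    | zero => simp
    | succ n ih =>
      have e : x (k + (n + 1)) - x k = (x (k + n + 1) - x (k + n)) + (x (k + n) - x k) := by
        rw [← add_assoc]; abel
      rw [e, ← add_assoc]
      refine (norm_add_le _ _).trans ?_
      have := hdist (k + n)
      linarith
  obtain ⟨τ, hτ⟩ : ∃ τ, Filter.Tendsto t Filter.atTop (nhds τ) :=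
    ⟨_, tendsto_atTop_ciSup htmono ⟨tstar, by rintro _ ⟨k, rfl⟩; exact (htk k).2.le⟩⟩
  have hcau : CauchySeq x := by
    have hsum : Summable (fun k => t (k + 1) - t k) := by
      refine summable_of_sum_range_le (c := tstar) (fun k => ?_) (fun n => ?_)
      · have := htmono (Nat.le_succ k); simpa using this
      · rw [Finset.sum_range_sub, ht0, sub_zero]; exact (htk n).2.le
    refine cauchySeq_of_dist_le_of_summable _ (fun k => ?_) hsum
    rw [dist_comm, dist_eq_norm]; exact hdist k
  obtain ⟨xs, hxs⟩ := cauchySeq_tendsto_of_complete hcau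
  have hxsk : ∀ k, ‖xs - x k‖ ≤ tstar - t k := by
    intro k
    have h1 : Filter.Tendsto (fun n => ‖x n - x k‖) Filter.atTop (nhds ‖xs - x k‖) :=
      (hxs.sub_const _).norm
    refine le_of_tendsto h1 (Filter.eventually_atTop.2 ⟨k, fun n hn => ?_⟩)
    obtain ⟨j, rfl⟩ := Nat.exists_eq_add_of_le hn
    have := hdist2 k j
    linarith [(htk (k + j)).2]
  have hx0' : x 0 = x₀ := hxdef 0
  have hxs0 : ‖xs - x₀‖ ≤ tstar := by
    have := hxsk 0; rwa [hx0', ht0, sub_zero] at this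
  have hxsD : xs ∈ D := hinD xs hxs0
  have hgxs : g xs = 0 := by
    have h1 : Filter.Tendsto (fun n => g (x n)) Filter.atTop (nhds (g xs)) :=
      ((hg xs hxsD).continuousAt.tendsto).comp hxs
    have h2 : Filter.Tendsto (fun n => t (n + 1) - t n) Filter.atTop (nhds 0) := by
      have := (hτ.comp (Filter.tendsto_add_atTop_nat 1)).sub hτ
      simpa using this
    have h3 : Filter.Tendsto (fun n => g (x n)) Filter.atTop (nhds 0) := by
      refine squeeze_zero_norm (fun n => ?_) h2
      obtain ⟨s1, s2, s3, s4, s5, s6, s7, -⟩ := hsc n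
      exact (hres n).trans s7
    exact tendsto_nhds_unique h1 h3
  refine ⟨x, fun k => ne k (sq k), fun k => nm k (sq k), hx0', ?_, ?_, xs, ?_, hxs, ?_, ?_, ?_, ?_⟩
  · intro k
    rw [← hxk, ← hxk1]
    exact ⟨hn1 k (sq k), hn2 k (sq k), hn3 k (sq k)⟩
  · intro k
    exact mem_ball_iff_norm.2 ((hball k).trans_lt (htk k).2)
  · exact mem_closedBall_iff_norm.2 hxs0
  · rw [hgdef] at hgxs
    simpa using hgxs
  · intro y hy hFy
    have hy' := mem_ball_iff_norm.1 hy
    obtain ⟨ρ, hρ1, hρ2⟩ := exists_between (max_lt hy' hab)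
    refine hk_uniq D hDconv g g' g'' hg hg' L η hL hη hlip' x₀ hx₀ hid hη' (hballD hy) hxsD
      (by rw [hgdef]; simp [hFy]) hgxs tstar ρ hxs0 ((le_max_left _ _).trans hρ1.le) ?_
    have hρa : tstar < ρ := (le_max_right _ _).trans_lt hρ1
    have hq : -1 + η / 2 * (tstar + tstst) +
        L / 6 * (tstar ^ 2 + tstar * tstst + tstst ^ 2) = 0 := by
      have : (tstst - tstar) * (-1 + η / 2 * (tstar + tstst) +
        L / 6 * (tstar ^ 2 + tstar * tstst + tstst ^ 2)) = 0 := by linear_combination hb - ha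
      exact (mul_eq_zero.1 this).resolve_left (by linarith)
    rw [← hq]
    have hρ0 : 0 ≤ ρ := ha0.trans hρa.le
    gcongr
  · intro k
    have := (hn5 k (sq k) xs hxsD hgxs (by rw [hxk]; exact hxsk k)).1
    rwa [hxk1, hxk] at this
  · intro k
    have := (hn5 k (sq k) xs hxsD hgxs (by rw [hxk]; exact hxsk k)).2
    rwa [hxk1, hxk] at this
end

section
/- Let X, Y be Banach spaces, D ⊂ X open and convex, F : D → Y twice continuously Fréchet differentiable, x₀ ∈ D with F'(x₀) invertible. Suppose that for some γ > 0, ‖F'(x₀)⁻¹[F''(y) − F''(x)]‖ ≤ 2γ/(1 − γ‖y − x‖ − γ‖x − x₀‖)³ − 2γ/(1 − γ‖x − x₀‖)³ for all x, y with ‖y − x‖ + ‖x − x₀‖ < 1/γ, and that ‖F'(x₀)⁻¹F(x₀)‖ ≤ β and ‖F'(x₀)⁻¹F''(x₀)‖ ≤ 2γ. If α := βγ < 3 − 2√2, then: the Halley sequence (x_k) starting at x₀ is well defined, contained in B(x₀,t*), and converges to a point x* in the closed ball of radius t* about x₀ with F(x*) = 0; x* is the unique zero of F in B(x₀,t**),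 where t* = (1 + α − √((1+α)² − 8α))/(4γ) and t** = (1 + α + √((1+α)² − 8α))/(4γ); the error bound ‖x* − x_{k+1}‖ ≤ (t* − t_{k+1})·(‖x* − x_k‖/(t* − t_k))³ holds for all k, where (t_k) is the majorizing sequence for f(t) = β − t + γt²/(1 − γt); and ‖x* − x_{k+1}‖ ≤ 8γ²/(3(2(1 − γt*)² − 1)²)·‖x* − x_k‖³ for all k. -/
open Metric Set

set_option maxHeartbeats 1000000 in
lemma hal_scalar (γ β u T t v c a b L Δ : ℝ) (hγ : 0 < γ) (hu0 : 0 < u) (hu1 : u < 1) (hu2 : 1 < 2 * u ^ 2)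
    (huT : u = 1 - γ * T) (hβ : β * γ * u = (1 - u) * (2 * u - 1))
    (ht0 : 0 ≤ t) (htT : t < T) (hv : v = 1 - γ * t)
    (hc : c = β - t + γ * t ^ 2 / v) (ha : a = 2 - 1 / v ^ 2) (hb : b = 2 * γ / v ^ 3)
    (hL : L = c * b / (2 * a ^ 2)) (hΔ : Δ = c / (a * (1 - L))) :
    u < v ∧ v ≤ 1 ∧ 0 ≤ c ∧ c ≤ 2 * (T - t) ∧ 0 < a ∧ 0 ≤ L ∧ L < 1 ∧ 0 ≤ Δ ∧
    0 < T - (t + Δ) ∧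
    T - (t + Δ) ≤ 2 * γ ^ 2 / (2 * u ^ 2 - 1) ^ 2 * (T - t) ^ 3 ∧
    T - (t + Δ) ≤ (1 - (2 * u ^ 2 - 1) ^ 2 / 8) * (T - t) := by
  have huv : u < v := by rw [huT, hv]; nlinarith
  have hv1 : v ≤ 1 := by rw [hv]; nlinarith
  have hv0 : 0 < v := hu0.trans huv
  have htv : t = (1 - v) / γ := by field_simp; linarith
  have hTu : T = (1 - u) / γ := by field_simp; linarith
  have hTt : T - t = (v - u) / γ := by rw [htv, hTu]; ring
  have hβ' : β = (1 - u) * (2 * u - 1) / (γ * u) := by field_simp; linarith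
  have h2uv : 2 * u ^ 2 < 2 * u * v := by nlinarith
  have huv1 : 1 < 2 * u * v := by linarith
  have hv2 : 2 * u * v < 2 * v ^ 2 := by nlinarith
  have hw : 0 < 2 * v ^ 2 - 1 := by linarith
  have hc' : c = (v - u) * (2 * u * v - 1) / (γ * u * v) := by
    rw [hc, hβ', htv]; field_simp; ring
  have ha' : a = (2 * v ^ 2 - 1) / v ^ 2 := by rw [ha]; field_simp
  have hc0 : 0 < c := by
    rw [hc']; exact div_pos (mul_pos (by linarith) (by linarith)) (by positivity)
  have ha0 : 0 < a := by rw [ha']; positivity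
  obtain ⟨Q, hQ⟩ : ∃ Q, Q = 4 * u * v ^ 3 - 6 * u * v + 2 * u ^ 2 + 1 := ⟨_, rfl⟩
  have hQge : (2 * u ^ 2 - 1) ^ 2 ≤ Q := by
    have : Q - (2 * u ^ 2 - 1) ^ 2 = 2 * u * (v - u) * (2 * (v ^ 2 + u * v + u ^ 2) - 3) := by
      rw [hQ]; ring
    have h2 : 0 ≤ 2 * u * (v - u) * (2 * (v ^ 2 + u * v + u ^ 2) - 3) :=
      mul_nonneg (mul_nonneg (by linarith) (by linarith)) (by linarith)
    linarith
  have hd0 : 0 < 2 * u ^ 2 - 1 := by linarith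
  have hQ0 : 0 < Q := lt_of_lt_of_le (by positivity) hQge
  have hQ8 : Q ≤ 8 := by
    rw [hQ]
    have : v ^ 3 ≤ 1 := pow_le_one₀ hv0.le hv1
    have : u * v ^ 3 ≤ 1 := by nlinarith [pow_pos hv0 3]
    nlinarith [mul_pos hu0 hv0]
  have hL' : L = (v - u) * (2 * u * v - 1) / (u * (2 * v ^ 2 - 1) ^ 2) := by
    rw [hL, hc', ha', hb]; field_simp
  have hL1 : 1 - L = v * Q / (u * (2 * v ^ 2 - 1) ^ 2) := by
    rw [hL', hQ, eq_div_iff (by positivity), sub_mul, div_mul_cancel₀ _ (by positivity)]; ring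
  have hL1p : 0 < 1 - L := by rw [hL1]; positivity
  have hΔ' : Δ = (v - u) * (2 * u * v - 1) * (2 * v ^ 2 - 1) / (γ * Q) := by
    have hw' := hw.ne'
    rw [hΔ, hL1, hc', ha']
    clear hΔ hL1 hc' ha' hc ha hb hL hL' hQ hβ' hTt hTu htv hL1p hQge hQ8 hc0 ha0 hd0 huv1 hv2 h2uv hβ hu2
    generalize 2 * v ^ 2 - 1 = w at *
    generalize (v - u) * (2 * u * v - 1) = p at *
    field_simp
  have hΔ0 : 0 ≤ Δ := by rw [hΔ]; positivity
  have hTt' : T - (t + Δ) = 2 * (v - u) ^ 3 / (γ * Q) := by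
    have : T - (t + Δ) = (v - u) / γ - Δ := by linarith
    rw [this, hΔ']; field_simp; rw [hQ]; ring
  have hvu : 0 < v - u := by linarith
  refine ⟨huv, hv1, hc0.le, ?_, ha0, ?_, by linarith, hΔ0, ?_, ?_, ?_⟩
  · rw [hTt, hc', ← mul_div_assoc, div_le_div_iff₀ (by positivity) hγ]
    have : (v - u) * (2 * u * v - 1) ≤ (v-u) * (2 * u * v) := by nlinarith
    nlinarith
  · rw [hL']; exact div_nonneg (mul_nonneg hvu.le (by linarith)) (by positivity)
  · rw [hTt']; positivity
  · rw [hTt', hTt]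
    have : 2 * γ ^ 2 / (2 * u ^ 2 - 1) ^ 2 * ((v - u) / γ) ^ 3 = 2 * (v - u) ^ 3 / (γ * (2 * u ^ 2 - 1) ^ 2) := by
      field_simp
    rw [this]
    gcongr
  · have h1 : (2 * u ^ 2 - 1) ^ 2 / 8 * (T - t) ≤ Δ := by
      rw [hTt, hΔ', div_mul_div_comm, div_le_div_iff₀ (by positivity) (by positivity)]
      have e1 : (2 * u ^ 2 - 1) ^ 2 ≤ (2 * u * v - 1) * (2 * v ^ 2 - 1) := by
        rw [sq]; apply mul_le_mul <;> linarith
      calc (2 * u ^ 2 - 1) ^ 2 * (v - u) * (γ * Q) ≤ ((2 * u * v - 1) * (2 * v ^ 2 - 1)) * (v - u) * (γ * 8) := by gcongr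
        _ = _ := by ring
    linarith

/-- Neumann -/
lemma hal_neumann {X : Type*} [NormedAddCommGroup X] [NormedSpace ℝ X] [CompleteSpace X]
    (A : X →L[ℝ] X) (L : ℝ) (hL : L < 1) (hA : ‖A‖ ≤ L) :
    ∃ m : X ≃L[ℝ] X, (m : X →L[ℝ] X) = ContinuousLinearMap.id ℝ X - A ∧
      ∀ z, ‖m.symm z‖ ≤ ‖z‖ / (1 - L) := by
  let U := Units.oneSub A (lt_of_le_of_lt hA hL)
  refine ⟨ContinuousLinearEquiv.ofUnit U, ?_, ?_⟩
  · ext z; rfl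
  · intro z
    obtain ⟨w, rfl⟩ := (ContinuousLinearEquiv.ofUnit U).surjective z
    rw [ContinuousLinearEquiv.symm_apply_apply, le_div_iff₀ (by linarith)]
    have h1 : (ContinuousLinearEquiv.ofUnit U) w = w - A w := rfl
    rw [h1]
    have h2 : ‖A w‖ ≤ L * ‖w‖ := A.le_of_opNorm_le hA w
    have h3 := norm_sub_norm_le w (A w)
    nlinarith

lemma hal_alg {X : Type*} [NormedAddCommGroup X] [NormedSpace ℝ X] [CompleteSpace X]
    (e : X ≃L[ℝ] X) (B : X →L[ℝ] X →L[ℝ] X) (g : X) (a b c L : ℝ) (ha : 0 < a)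
    (he : ∀ z, ‖e.symm z‖ ≤ ‖z‖ / a) (hB : ‖B‖ ≤ b) (hg : ‖g‖ ≤ c)
    (hL : L = c * b / (2 * a ^ 2)) (hL1 : L < 1) :
    ∃ m : X ≃L[ℝ] X, (m : X →L[ℝ] X) = ContinuousLinearMap.id ℝ X -
          (2⁻¹ : ℝ) • ((e.symm : X →L[ℝ] X).comp (B (e.symm g))) ∧
      ‖m.symm (e.symm g)‖ ≤ c / (a * (1 - L)) ∧
      (∀ h, h = - m.symm (e.symm g) →
        ‖g + e h + (2⁻¹ : ℝ) • B h h‖ ≤ 2⁻¹ * b * L * ‖h‖ ^ 2 ∧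
        ∀ d r, r = - (g + e d + (2⁻¹ : ℝ) • B d d) →
          ‖d - h‖ ≤ (‖r‖ + 2⁻¹ * b * ((2⁻¹ * b * ‖d‖ ^ 2 + ‖r‖) / a) * ‖d‖) / (a * (1 - L))) := by
  have hb0 : 0 ≤ b := le_trans (norm_nonneg B) hB
  have hc0 : 0 ≤ c := (norm_nonneg _).trans hg
  have hBB : ∀ p q, ‖B p q‖ ≤ b * ‖p‖ * ‖q‖ := fun p q => by
    have := B.le_opNorm₂ p q
    refine this.trans (by gcongr)
  have hL1' : 0 < 1 - L := by linarith
  have heg : ‖e.symm g‖ ≤ c / a := (he g).trans (by gcongr)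
  have hA : ‖(2⁻¹ : ℝ) • ((e.symm : X →L[ℝ] X).comp (B (e.symm g)))‖ ≤ L := by
    have hL0 : 0 ≤ L := by rw [hL]; positivity
    refine ContinuousLinearMap.opNorm_le_bound _ hL0 fun z => ?_
    simp only [smul_apply, ContinuousLinearMap.comp_apply, norm_smul]
    calc ‖(2⁻¹ : ℝ)‖ * ‖e.symm (B (e.symm g) z)‖ ≤ 2⁻¹ * ((b * (c / a) * ‖z‖) / a) := by
          have := he (B (e.symm g) z)
          have h2 := hBB (e.symm g) z
          have h3 : ‖(2⁻¹ : ℝ)‖ = 2⁻¹ := by norm_num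
          rw [h3]
          refine mul_le_mul_of_nonneg_left (this.trans ?_) (by norm_num)
          refine div_le_div_of_nonneg_right (h2.trans ?_) ha.le
          gcongr
      _ = L * ‖z‖ := by rw [hL]; field_simp
  obtain ⟨m, hm, hms⟩ := hal_neumann _ L hL1 hA
  have hmz : ∀ z, m z = z - (2⁻¹ : ℝ) • e.symm (B (e.symm g) z) := fun z => by
    have := congrArg (fun A : X →L[ℝ] X => A z) hm
    simpa using this
  have hme : ∀ z, ‖m.symm (e.symm z)‖ ≤ ‖z‖ / (a * (1 - L)) := fun z => by
    refine (hms _).trans ?_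
    rw [← div_div]
    exact div_le_div_of_nonneg_right (he z) hL1'.le
  refine ⟨m, hm, (hme g).trans (by gcongr), ?_⟩
  rintro h rfl
  set h : X := - m.symm (e.symm g) with hh
  have h1 : m h = - e.symm g := by simp [hh]
  constructor
  · -- L h
    set l : X := (2⁻¹ : ℝ) • e.symm (B (e.symm g) h) with hl
    have hln : ‖l‖ ≤ L * ‖h‖ := by
      have := ContinuousLinearMap.le_of_opNorm_le _ hA h
      simpa [hl] using this
    have h2 : e.symm g = l - h := by
      have := hmz h
      rw [h1] at this
      rw [← neg_eq_iff_eq_neg.mpr this.symm.symm.symm] 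
      simp [hl]
    have h3 : g = e l - e h := by
      rw [← map_sub, ← h2]; simp
    have h4 : e l = (2⁻¹ : ℝ) • (B l h - B h h) := by
      have : B (e.symm g) h = B l h - B h h := by rw [h2]; simp
      rw [← this, hl]; simp
    have h5 : g + e h + (2⁻¹ : ℝ) • B h h = (2⁻¹ : ℝ) • B l h := by
      rw [h3, h4, smul_sub]; abel
    rw [h5, norm_smul]
    have h6 := hBB l h
    have h3 : ‖(2⁻¹ : ℝ)‖ = 2⁻¹ := by norm_num
    rw [h3]
    calc 2⁻¹ * ‖B l h‖ ≤ 2⁻¹ * (b * (L * ‖h‖) * ‖h‖) := by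
          gcongr; exact h6.trans (by gcongr)
      _ = _ := by ring
  · intro d r hr
    set q : X := (2⁻¹ : ℝ) • B d d + r with hq
    have hg1 : g = - e d - q := by rw [hq, hr]; abel
    have hg2 : e.symm g = - d - e.symm q := by rw [hg1]; simp
    have h2 : d - h = m.symm (e.symm (- r + (2⁻¹ : ℝ) • B (e.symm q) d)) := by
      apply m.injective
      rw [map_sub, h1, ContinuousLinearEquiv.apply_symm_apply, hmz]
      apply e.injective
      simp only [map_sub, map_add, map_smul, map_neg, ContinuousLinearEquiv.apply_symm_apply]
      have : B (e.symm g) d = - B d d - B (e.symm q) d := by rw [hg2]; simp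
      rw [this, hg1, hq, smul_sub, smul_neg]; abel
    have hqn : ‖q‖ ≤ 2⁻¹ * b * ‖d‖ ^ 2 + ‖r‖ := by
      refine (norm_add_le _ _).trans ?_
      rw [norm_smul]
      have h3 : ‖(2⁻¹ : ℝ)‖ = 2⁻¹ := by norm_num
      have := hBB d d
      rw [h3]; nlinarith
    have hen : ‖e.symm q‖ ≤ (2⁻¹ * b * ‖d‖ ^ 2 + ‖r‖) / a := (he q).trans (by gcongr)
    rw [h2]
    refine (hme _).trans ?_
    gcongr
    refine (norm_add_le _ _).trans ?_
    rw [norm_neg, norm_smul]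
    have h3 : ‖(2⁻¹ : ℝ)‖ = 2⁻¹ := by norm_num
    rw [h3]
    have := hBB (e.symm q) d
    have h7 : ‖B (e.symm q) d‖ ≤ b * ((2⁻¹ * b * ‖d‖ ^ 2 + ‖r‖) / a) * ‖d‖ :=
      this.trans (by gcongr)
    linarith

lemma hal_taylor {X : Type*} [NormedAddCommGroup X] [NormedSpace ℝ X]
    (D : Set X) (hDconv : Convex ℝ D)
    (G : X → X) (G' : X → X →L[ℝ] X) (G'' : X → X →L[ℝ] X →L[ℝ] X)
    (hdG : ∀ x ∈ D, HasFDerivAt G (G' x) x)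
    (hdG' : ∀ x ∈ D, HasFDerivAt G' (G'' x) x)
    (γ v δ : ℝ) (hγ : 0 < γ) (x h : X) (hx : x ∈ D) (hy : x + h ∈ D) (hδ : ‖h‖ = δ) (hv : γ * δ < v)
    (hmaj : ∀ z ∈ D, ‖z - x‖ ≤ δ → ‖G'' z - G'' x‖ ≤
        2 * γ / (v - γ * ‖z - x‖) ^ 3 - 2 * γ / v ^ 3) :
    ‖G' (x + h) - G' x - G'' x h‖ ≤
      1 / (v - γ * δ) ^ 2 - 1 / v ^ 2 - 2 * γ / v ^ 3 * δ ∧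
    ‖G (x + h) - G x - G' x h - (2⁻¹ : ℝ) • G'' x h h‖ ≤
      γ ^ 2 * δ ^ 3 / (v ^ 3 * (v - γ * δ)) := by
  have hδ0 : 0 ≤ δ := by rw [← hδ]; positivity
  have hv0 : 0 < v := lt_of_le_of_lt (by positivity) hv
  have hseg : ∀ s ∈ Icc (0:ℝ) 1, x + s • h ∈ D := fun s hs => by
    have := hDconv.add_smul_sub_mem hx hy hs
    simpa using this
  have hpos : ∀ s ∈ Icc (0:ℝ) 1, 0 < v - γ * (s * δ) := fun s hs => by
    have : s * δ ≤ δ := by nlinarith [hs.2]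
    nlinarith
  have hline : ∀ s : ℝ, HasDerivAt (fun s : ℝ => x + s • h) h s := fun s => by
    simpa using ((hasDerivAt_id s).smul_const h).const_add x
  have hden : ∀ s : ℝ, HasDerivAt (fun s : ℝ => v - γ * (s * δ)) (-(γ * δ)) s := fun s => by
    simpa using (((hasDerivAt_id s).mul_const δ).const_mul γ).const_sub v
  have hG1 : ∀ s ∈ Icc (0:ℝ) 1, HasDerivAt (fun s : ℝ => G' (x + s • h)) (G'' (x + s • h) h) s :=
    fun s hs => (hdG' _ (hseg s hs)).comp_hasDerivAt s (hline s)
  have hG0 : ∀ s ∈ Icc (0:ℝ) 1, HasDerivAt (fun s : ℝ => G (x + s • h)) (G' (x + s • h) h) s :=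
    fun s hs => (hdG _ (hseg s hs)).comp_hasDerivAt s (hline s)
  have key1 : ∀ s ∈ Icc (0:ℝ) 1, ‖G' (x + s • h) - G' x - s • G'' x h‖ ≤
      ((v - γ * (s * δ)) ^ 2)⁻¹ - 1 / v ^ 2 - 2 * γ / v ^ 3 * (s * δ) := by
    have hd : ∀ s ∈ Icc (0:ℝ) 1, HasDerivAt (fun s : ℝ => G' (x + s • h) - G' x - s • G'' x h)
        (G'' (x + s • h) h - G'' x h) s := fun s hs => by
      have h2 := ((hG1 s hs).sub_const (G' x)).sub ((hasDerivAt_id s).smul_const (G'' x h))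
      have h3 : HasDerivAt (fun s : ℝ => G' (x + s • h) - G' x - s • G'' x h) _ s := h2
      exact h3.congr_deriv (by rw [one_smul])
    have hB : ∀ s ∈ Icc (0:ℝ) 1, HasDerivAt
        (fun s : ℝ => ((v - γ * (s * δ)) ^ 2)⁻¹ - 1 / v ^ 2 - 2 * γ / v ^ 3 * (s * δ))
        ((2 * γ / (v - γ * (s * δ)) ^ 3 - 2 * γ / v ^ 3) * δ) s := fun s hs => by
      have hp := (hpos s hs).ne'
      have h1 := (((hden s).pow 2).inv (pow_ne_zero 2 hp)).sub_const (1 / v ^ 2)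
      have h2 := h1.sub (((hasDerivAt_id s).mul_const δ).const_mul (2 * γ / v ^ 3))
      have h3 : HasDerivAt (fun s : ℝ => ((v - γ * (s * δ)) ^ 2)⁻¹ - 1 / v ^ 2 - 2 * γ / v ^ 3 * (s * δ)) _ s := h2
      refine h3.congr_deriv ?_
      simp only [Pi.pow_apply]
      generalize v - γ * (s * δ) = w at *
      push_cast
      field_simp
      try ring
    intro s hs
    refine image_norm_le_of_norm_deriv_right_le_deriv_boundary' (a := 0) (b := 1)
      (fun s hs => (hd s hs).continuousAt.continuousWithinAt)
      (fun s hs => (hd s (Ico_subset_Icc_self hs)).hasDerivWithinAt) ?_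
      (fun s hs => (hB s hs).continuousAt.continuousWithinAt)
      (fun s hs => (hB s (Ico_subset_Icc_self hs)).hasDerivWithinAt) ?_ hs
    · simp
    · intro s hs'
      have hs := Ico_subset_Icc_self hs'
      have hn : ‖x + s • h - x‖ = s * δ := by
        rw [add_sub_cancel_left, norm_smul, Real.norm_of_nonneg hs.1, hδ]
      have := hmaj _ (hseg s hs) (by rw [hn]; nlinarith [hs.2])
      rw [hn] at this
      have h2 := ContinuousLinearMap.le_of_opNorm_le _ this h
      rw [hδ] at h2
      exact h2
  constructor
  · have := key1 1 (by simp)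
    simpa using this
  have hd : ∀ s ∈ Icc (0:ℝ) 1, HasDerivAt (fun s : ℝ => G (x + s • h) - G x - s • G' x h - (s ^ 2 * 2⁻¹) • G'' x h h)
      ((G' (x + s • h) - G' x - s • G'' x h) h) s := fun s hs => by
    have h2 := (((hG0 s hs).sub_const (G x)).sub ((hasDerivAt_id s).smul_const (G' x h))).sub
      ((((hasDerivAt_id s).pow 2).mul_const (2⁻¹ : ℝ)).smul_const (G'' x h h))
    have h3 : HasDerivAt (fun s : ℝ => G (x + s • h) - G x - s • G' x h - (s ^ 2 * 2⁻¹) • G'' x h h) _ s := h2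
    refine h3.congr_deriv ?_
    have e : ((2:ℕ):ℝ) * id s ^ (2 - 1) * 1 * 2⁻¹ = s := by simp; ring
    rw [e, one_smul]; rfl
  have hB : ∀ s ∈ Icc (0:ℝ) 1, HasDerivAt
      (fun s : ℝ => γ⁻¹ * (v - γ * (s * δ))⁻¹ - γ⁻¹ * (1 / v) - s * δ / v ^ 2 - γ / v ^ 3 * (s * δ) ^ 2)
      ((((v - γ * (s * δ)) ^ 2)⁻¹ - 1 / v ^ 2 - 2 * γ / v ^ 3 * (s * δ)) * δ) s := fun s hs => by
    have hp := (hpos s hs).ne'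
    have h1 := ((((hden s).inv hp).const_mul γ⁻¹).sub_const (γ⁻¹ * (1 / v))).sub
      (((hasDerivAt_id s).mul_const δ).div_const (v ^ 2))
    have h2 := h1.sub ((((hasDerivAt_id s).mul_const δ).pow 2).const_mul (γ / v ^ 3))
    have h3 : HasDerivAt (fun s : ℝ => γ⁻¹ * (v - γ * (s * δ))⁻¹ - γ⁻¹ * (1 / v) - s * δ / v ^ 2 - γ / v ^ 3 * (s * δ) ^ 2) _ s := h2
    refine h3.congr_deriv ?_
    simp only [id]
    generalize v - γ * (s * δ) = w at *
    push_cast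
    field_simp
    try ring
  have key2 := image_norm_le_of_norm_deriv_right_le_deriv_boundary' (a := 0) (b := 1)
      (fun s hs => (hd s hs).continuousAt.continuousWithinAt)
      (fun s hs => (hd s (Ico_subset_Icc_self hs)).hasDerivWithinAt) (by simp)
      (fun s hs => (hB s hs).continuousAt.continuousWithinAt)
      (fun s hs => (hB s (Ico_subset_Icc_self hs)).hasDerivWithinAt) (by
        intro s hs
        have := ContinuousLinearMap.le_of_opNorm_le _ (key1 s (Ico_subset_Icc_self hs)) h
        rwa [hδ] at this) (show (1:ℝ) ∈ Icc (0:ℝ) 1 by simp)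
  have hp := hpos 1 (by simp)
  have e2 : γ ^ 2 * δ ^ 3 / (v ^ 3 * (v - γ * δ)) = γ⁻¹ * (v - γ * (1 * δ))⁻¹ - γ⁻¹ * (1 / v) - 1 * δ / v ^ 2 - γ / v ^ 3 * (1 * δ) ^ 2 := by
    rw [one_mul] at hp ⊢
    field_simp
    ring
  rw [e2]
  simpa using key2

lemma hal_mono (γ p v v₀ : ℝ) (hγ : 0 < γ) (hp : 0 ≤ p) (hpv : p < v) (hv : v ≤ v₀) :
    2 * γ / (v₀ - p) ^ 3 - 2 * γ / v₀ ^ 3 ≤ 2 * γ / (v - p) ^ 3 - 2 * γ / v ^ 3 := by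
  have hv0 : 0 < v := by linarith
  have hw0 : 0 < v₀ := by linarith
  have h1 : 0 < v - p := by linarith
  have h2 : 0 < v₀ - p := by linarith
  have e : ∀ w, 0 < w → 0 < w - p → 2 * γ / (w - p) ^ 3 - 2 * γ / w ^ 3 =
      2 * γ * (p * (1 / (w - p)) * (1 / w) * ((1 / (w - p)) ^ 2 + (1 / (w - p)) * (1 / w) + (1 / w) ^ 2)) := by
    intro w hw hwp
    field_simp
    ring
  rw [e v hv0 h1, e v₀ hw0 h2]
  have hA : 1 / (v₀ - p) ≤ 1 / (v - p) := one_div_le_one_div_of_le h1 (by linarith)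
  have hB : 1 / v₀ ≤ 1 / v := one_div_le_one_div_of_le hv0 hv
  gcongr

set_option maxHeartbeats 4000000 in
lemma hal_step {X : Type*} [NormedAddCommGroup X] [NormedSpace ℝ X] [CompleteSpace X]
    (D : Set X) (hDconv : Convex ℝ D)
    (G : X → X) (G' : X → X →L[ℝ] X) (G'' : X → X →L[ℝ] X →L[ℝ] X)
    (hdG : ∀ x ∈ D, HasFDerivAt G (G' x) x)
    (hdG' : ∀ x ∈ D, HasFDerivAt G' (G'' x) x)
    (x₀ : X) (hx₀ : x₀ ∈ D) (hG0 : G' x₀ = ContinuousLinearMap.id ℝ X)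
    (γ β : ℝ) (hγ : 0 < γ) (hballD : ball x₀ (1 / γ) ⊆ D)
    (hmaj : ∀ x ∈ D, ∀ y ∈ D, ‖y - x‖ + ‖x - x₀‖ < 1 / γ →
      ‖G'' y - G'' x‖ ≤ 2 * γ / (1 - γ * ‖y - x‖ - γ * ‖x - x₀‖) ^ 3 -
          2 * γ / (1 - γ * ‖x - x₀‖) ^ 3)
    (hinit2 : ‖G'' x₀‖ ≤ 2 * γ)
    (u T t v c a b L Δ : ℝ) (hu0 : 0 < u) (hu1 : u < 1) (hu2 : 1 < 2 * u ^ 2)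
    (huT : u = 1 - γ * T) (hβ : β * γ * u = (1 - u) * (2 * u - 1))
    (ht0 : 0 ≤ t) (htT : t < T) (hv : v = 1 - γ * t)
    (hc : c = β - t + γ * t ^ 2 / v) (ha : a = 2 - 1 / v ^ 2) (hb : b = 2 * γ / v ^ 3)
    (hL : L = c * b / (2 * a ^ 2)) (hΔ : Δ = c / (a * (1 - L)))
    (x : X) (hxt : ‖x - x₀‖ ≤ t) (hGx : ‖G x‖ ≤ c) :
    ∃ (e m : X ≃L[ℝ] X), (e : X →L[ℝ] X) = G' x ∧
      (m : X →L[ℝ] X) = ContinuousLinearMap.id ℝ X -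
          (2⁻¹ : ℝ) • ((e.symm : X →L[ℝ] X).comp (G'' x (e.symm (G x)))) ∧
      ‖m.symm (e.symm (G x))‖ ≤ Δ ∧
      ‖G (x - m.symm (e.symm (G x)))‖ ≤ β - (t + Δ) + γ * (t + Δ) ^ 2 / (1 - γ * (t + Δ)) ∧
      ∀ y, G y = 0 → ‖y - x‖ ≤ T - t →
        ‖y - (x - m.symm (e.symm (G x)))‖ ≤ (T - (t + Δ)) * (‖y - x‖ / (T - t)) ^ 3 := by
  obtain ⟨huv, hv1, hc0, -, ha0, hL0, hL1, hΔ0, hT', -, -⟩ :=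
    hal_scalar γ β u T t v c a b L Δ hγ hu0 hu1 hu2 huT hβ ht0 htT hv hc ha hb hL hΔ
  have hv0 : 0 < v := hu0.trans huv
  have hTγ : T < 1 / γ := by rw [lt_div_iff₀ hγ]; linarith
  have hmemD : ∀ y, ‖y - x₀‖ ≤ T → y ∈ D := fun y hy =>
    hballD (by rw [mem_ball, dist_eq_norm]; linarith)
  have hxD : x ∈ D := hmemD x (by linarith)
  obtain ⟨ρ, hρ⟩ : ∃ ρ, ρ = ‖x - x₀‖ := ⟨_, rfl⟩
  have hρ0 : 0 ≤ ρ := by rw [hρ]; positivity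
  have hρt : ρ ≤ t := by rw [hρ]; exact hxt
  have hvρ : v ≤ 1 - γ * ρ := by rw [hv]; nlinarith
  have hG2 : ‖G'' x‖ ≤ b := by
    have h1 := hmaj x₀ hx₀ x hxD (by simp; rw [← hρ, ← one_div]; linarith)
    simp only [sub_self, norm_zero, mul_zero, sub_zero, one_pow, div_one] at h1
    have h2 : ‖G'' x‖ ≤ ‖G'' x - G'' x₀‖ + ‖G'' x₀‖ := by
      simpa using norm_add_le (G'' x - G'' x₀) (G'' x₀)
    have h3 : 2 * γ / (1 - γ * ‖x - x₀‖) ^ 3 ≤ b := by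
      rw [hb, ← hρ]; gcongr
    linarith
  have hmaj0 : ∀ z ∈ D, ‖z - x₀‖ ≤ ρ → ‖G'' z - G'' x₀‖ ≤
      2 * γ / (1 - γ * ‖z - x₀‖) ^ 3 - 2 * γ / (1:ℝ) ^ 3 := fun z hz hzn => by
    have h1 := hmaj x₀ hx₀ z hz (by simp; rw [← one_div]; linarith)
    simpa using h1
  have hG1 : ‖ContinuousLinearMap.id ℝ X - G' x‖ ≤ 1 / v ^ 2 - 1 := by
    have h1 := (hal_taylor D hDconv G G' G'' hdG hdG' γ 1 ρ hγ x₀ (x - x₀) hx₀ (by simpa using hxD)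
      hρ.symm (by linarith) hmaj0).1
    rw [add_sub_cancel, hG0] at h1
    have h2 : ‖G'' x₀ (x - x₀)‖ ≤ 2 * γ * ρ := by
      rw [hρ]; exact ContinuousLinearMap.le_of_opNorm_le _ hinit2 _
    have h3 : 1 / (1 - γ * ρ) ^ 2 ≤ 1 / v ^ 2 := by gcongr
    have h4 := norm_add_le (G' x - ContinuousLinearMap.id ℝ X - G'' x₀ (x - x₀)) (G'' x₀ (x - x₀))
    rw [sub_add_cancel] at h4
    rw [norm_sub_rev]
    simp only [one_pow, div_one] at h1
    linarith
  obtain ⟨e, he, hes⟩ := hal_neumann _ (1 / v ^ 2 - 1) (by linarith) hG1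
  have hea : ∀ z, ‖e.symm z‖ ≤ ‖z‖ / a := fun z => by
    have := hes z
    rwa [show 1 - (1 / v ^ 2 - 1) = a by rw [ha]; ring] at this
  have he' : (e : X →L[ℝ] X) = G' x := by rw [he]; abel
  have hez : ∀ z, e z = G' x z := fun z => by rw [← he']; rfl
  obtain ⟨m, hm, hmn, hrest⟩ := hal_alg e (G'' x) (G x) a b c L ha0 hea hG2 hGx hL hL1
  rw [← hΔ] at hmn
  obtain ⟨h, hh⟩ : ∃ h, h = - m.symm (e.symm (G x)) := ⟨_, rfl⟩
  obtain ⟨hr1, hr2⟩ := hrest h hh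
  have hx' : x - m.symm (e.symm (G x)) = x + h := by rw [hh]; abel
  have hhn : ‖h‖ ≤ Δ := by rw [hh, norm_neg]; exact hmn
  have hT1 : γ * (t + Δ) < 1 - u := by rw [huT]; nlinarith
  have hT2 : γ * Δ < v := by rw [hv]; nlinarith
  have hL1' : 0 < 1 - L := by linarith
  -- Taylor at x
  have htay : ∀ d, x + d ∈ D → γ * ‖d‖ < v →
      ‖G (x + d) - G x - G' x d - (2⁻¹ : ℝ) • G'' x d d‖ ≤
      γ ^ 2 * ‖d‖ ^ 3 / (v ^ 3 * (v - γ * ‖d‖)) := fun d hd hdv => by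
    refine (hal_taylor D hDconv G G' G'' hdG hdG' γ v ‖d‖ hγ x d hxD hd rfl hdv ?_).2
    intro z hz hzn
    have hzv : γ * ‖z - x‖ < v := lt_of_le_of_lt (by gcongr) hdv
    have h1 := hmaj x hxD z hz (by
      rw [lt_div_iff₀ hγ, ← hρ]; nlinarith)
    have h2 := hal_mono γ (γ * ‖z - x‖) v (1 - γ * ρ) hγ (by positivity) hzv hvρ
    rw [← hρ] at h1
    rw [show 1 - γ * ‖z - x‖ - γ * ρ = 1 - γ * ρ - γ * ‖z - x‖ by ring] at h1
    linarith
  have hcΔ : c = a * Δ * (1 - L) := by rw [hΔ]; field_simp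
  have hLa : 2 * a ^ 2 * L = c * b := by rw [hL]; field_simp
  have hfe : ∀ τ, γ * τ < v → β - (t + τ) + γ * (t + τ) ^ 2 / (1 - γ * (t + τ)) =
      c - a * τ + 2⁻¹ * b * τ ^ 2 + γ ^ 2 * τ ^ 3 / (v ^ 3 * (v - γ * τ)) := fun τ hτ => by
    have e1 : 1 - γ * (t + τ) = v - γ * τ := by rw [hv]; ring
    have htv : t = (1 - v) / γ := by field_simp; linarith
    rw [e1, hc, ha, hb, htv]
    have : v - γ * τ ≠ 0 := by linarith
    field_simp
    ring
  refine ⟨e, m, he', hm, hmn, ?_, ?_⟩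
  · rw [hx']
    have hxhD : x + h ∈ D := hmemD _ (by
      have : x + h - x₀ = (x - x₀) + h := by abel
      rw [this]; exact (norm_add_le _ _).trans (by linarith))
    have hδv : γ * ‖h‖ < v := lt_of_le_of_lt (by gcongr) hT2
    have h1 := htay h hxhD hδv
    have h2 : G (x + h) = (G (x + h) - G x - G' x h - (2⁻¹ : ℝ) • G'' x h h) +
      (G x + e h + (2⁻¹ : ℝ) • G'' x h h) := by rw [hez]; abel
    have h3 : ‖G (x + h)‖ ≤ γ ^ 2 * ‖h‖ ^ 3 / (v ^ 3 * (v - γ * ‖h‖)) + 2⁻¹ * b * L * ‖h‖ ^ 2 := by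
      rw [h2]; exact (norm_add_le _ _).trans (add_le_add h1 hr1)
    have hb0 : 0 ≤ b := by rw [hb]; positivity
    have h4 : γ ^ 2 * ‖h‖ ^ 3 / (v ^ 3 * (v - γ * ‖h‖)) ≤ γ ^ 2 * Δ ^ 3 / (v ^ 3 * (v - γ * Δ)) := by
      have : 0 < v - γ * Δ := by linarith
      gcongr
    have h5 : 2⁻¹ * b * L * ‖h‖ ^ 2 ≤ 2⁻¹ * b * L * Δ ^ 2 := by gcongr
    rw [hfe Δ hT2]
    have h6 : c - a * Δ + 2⁻¹ * b * Δ ^ 2 = 2⁻¹ * b * L * Δ ^ 2 := by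
      have h7 : 2 * a * L = Δ * (1 - L) * b := by
        apply mul_left_cancel₀ ha0.ne'
        rw [hcΔ] at hLa
        linarith
      rw [hcΔ]
      linear_combination (-Δ / 2) * h7
    linarith
  · intro y hy hyx
    rw [hx']
    obtain ⟨d, hd⟩ : ∃ d, d = y - x := ⟨_, rfl⟩
    have hyd : x + d = y := by rw [hd]; abel
    rw [show y - (x + h) = d - h by rw [hd]; abel, ← hd]
    rw [← hd] at hyx
    obtain ⟨τ, hτ⟩ : ∃ τ, τ = T - t := ⟨_, rfl⟩
    have hτ0 : 0 < τ := by linarith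
    rw [← hτ] at hyx ⊢
    have hτv : v - γ * τ = u := by rw [hτ, hv, huT]; ring
    have hyD : y ∈ D := hmemD y (by
      have : y - x₀ = (x - x₀) + d := by rw [hd]; abel
      rw [this]; exact (norm_add_le _ _).trans (by linarith))
    have hdτ : γ * ‖d‖ ≤ γ * τ := by gcongr
    have h1 := htay d (by rw [hyd]; exact hyD) (by linarith)
    rw [hyd, hy] at h1
    have h2 := hr2 d _ rfl
    rw [hez] at h2
    rw [show (0 - G x - G' x d - (2⁻¹ : ℝ) • G'' x d d) = -(G x + G' x d + (2⁻¹ : ℝ) • G'' x d d) by abel] at h1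
    generalize ‖-(G x + G' x d + (2⁻¹ : ℝ) • G'' x d d)‖ = r at h1 h2
    refine h2.trans ?_
    obtain ⟨R, hR⟩ : ∃ R, R = γ ^ 2 * τ ^ 3 / (v ^ 3 * (v - γ * τ)) := ⟨_, rfl⟩
    obtain ⟨q, hq⟩ : ∃ q, q = ‖d‖ / τ := ⟨_, rfl⟩
    have hdq : ‖d‖ = q * τ := by rw [hq]; field_simp
    have hq0 : 0 ≤ q := by rw [hq]; positivity
    have hq1 : q ≤ 1 := by rw [hq, div_le_one hτ0]; exact hyx
    rw [← hq]
    have hR0 : 0 ≤ R := by rw [hR, hτv]; positivity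
    have hrR : r ≤ R * q ^ 3 := by
      refine h1.trans ?_
      have : 0 < v - γ * τ := by linarith
      calc γ ^ 2 * ‖d‖ ^ 3 / (v ^ 3 * (v - γ * ‖d‖)) ≤ γ ^ 2 * ‖d‖ ^ 3 / (v ^ 3 * (v - γ * τ)) := by gcongr
        _ = R * q ^ 3 := by rw [hdq, hR]; ring
    have hb0 : 0 ≤ b := by rw [hb]; positivity
    have hfT : 0 = c - a * τ + 2⁻¹ * b * τ ^ 2 + R := by
      rw [hR, ← hfe τ (by linarith)]
      have e1 : t + τ = T := by rw [hτ]; ring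
      rw [e1, ← huT]
      have hTu : T = (1 - u) / γ := by field_simp; linarith
      have hβ' : β = (1 - u) * (2 * u - 1) / (γ * u) := by field_simp; linarith
      rw [hTu, hβ']; field_simp; ring
    have hTT : T - (t + Δ) = (R + 2⁻¹ * b * ((2⁻¹ * b * τ ^ 2 + R) / a) * τ) / (a * (1 - L)) := by
      have e2 : 2⁻¹ * b * τ ^ 2 + R = a * τ - c := by linarith
      rw [e2, eq_div_iff (by positivity)]
      have e3 : 2⁻¹ * b * ((a * τ - c) / a) * τ = 2⁻¹ * b * τ ^ 2 - a * L * τ := by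
        field_simp
        linear_combination hLa
      rw [e3, show T - (t + Δ) = τ - Δ by rw [hτ]; ring]
      linear_combination hcΔ + hfT
    rw [hTT, div_mul_eq_mul_div]
    gcongr
    rw [add_mul]
    refine add_le_add hrR ?_
    rw [hdq]
    have hq43 : q ^ 4 ≤ q ^ 3 := pow_le_pow_of_le_one hq0 hq1 (by norm_num)
    calc 2⁻¹ * b * ((2⁻¹ * b * (q * τ) ^ 2 + r) / a) * (q * τ)
        ≤ 2⁻¹ * b * ((2⁻¹ * b * (q * τ) ^ 2 + R * q ^ 3) / a) * (q * τ) := by gcongr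
      _ = 2⁻¹ * b * ((2⁻¹ * b * τ ^ 2 * q ^ 3 + R * q ^ 4) / a) * τ := by ring
      _ ≤ 2⁻¹ * b * ((2⁻¹ * b * τ ^ 2 * q ^ 3 + R * q ^ 3) / a) * τ := by gcongr
      _ = _ := by ring

set_option maxHeartbeats 4000000 in
lemma hal_core {X : Type*} [NormedAddCommGroup X] [NormedSpace ℝ X] [CompleteSpace X]
    (D : Set X) (hDconv : Convex ℝ D)
    (G : X → X) (G' : X → X →L[ℝ] X) (G'' : X → X →L[ℝ] X →L[ℝ] X)
    (hdG : ∀ x ∈ D, HasFDerivAt G (G' x) x)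
    (hdG' : ∀ x ∈ D, HasFDerivAt G' (G'' x) x)
    (x₀ : X) (hx₀ : x₀ ∈ D) (hG0 : G' x₀ = ContinuousLinearMap.id ℝ X)
    (γ β : ℝ) (hγ : 0 < γ) (hβ : 0 < β) (hballD : ball x₀ (1 / γ) ⊆ D)
    (hmaj : ∀ x ∈ D, ∀ y ∈ D, ‖y - x‖ + ‖x - x₀‖ < 1 / γ →
      ‖G'' y - G'' x‖ ≤ 2 * γ / (1 - γ * ‖y - x‖ - γ * ‖x - x₀‖) ^ 3 -
          2 * γ / (1 - γ * ‖x - x₀‖) ^ 3)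
    (hinit1 : ‖G x₀‖ ≤ β)
    (hinit2 : ‖G'' x₀‖ ≤ 2 * γ)
    (hα : β * γ < 3 - 2 * Real.sqrt 2)
    (f f1 f2 : ℝ → ℝ)
    (hf : ∀ s, f s = β - s + γ * s ^ 2 / (1 - γ * s))
    (hf1 : ∀ s, f1 s = -2 + 1 / (1 - γ * s) ^ 2)
    (hf2 : ∀ s, f2 s = 2 * γ / (1 - γ * s) ^ 3)
    (tstar tstst : ℝ)
    (hts : tstar = (1 + β * γ - Real.sqrt ((1 + β * γ) ^ 2 - 8 * (β * γ))) / (4 * γ))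
    (htss : tstst = (1 + β * γ + Real.sqrt ((1 + β * γ) ^ 2 - 8 * (β * γ))) / (4 * γ))
    (t : ℕ → ℝ) (ht0 : t 0 = 0)
    (hrec : ∀ k, t (k + 1) =
      t k - (1 / (1 - f (t k) * f2 (t k) / (2 * (f1 (t k)) ^ 2))) * (f (t k) / f1 (t k))) :
    ∃ (x : ℕ → X) (e : ℕ → (X ≃L[ℝ] X)) (m : ℕ → (X ≃L[ℝ] X)),
      x 0 = x₀ ∧
      (∀ k,
        ((e k : X →L[ℝ] X) = G' (x k)) ∧
        ((m k : X →L[ℝ] X) = ContinuousLinearMap.id ℝ X -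
          (2⁻¹ : ℝ) • (((e k).symm : X →L[ℝ] X).comp
            ((G'' (x k)) ((e k).symm (G (x k)))))) ∧
        (x (k + 1) = x k - (m k).symm ((e k).symm (G (x k))))) ∧
      (∀ k, x k ∈ ball x₀ tstar) ∧
      ∃ xs ∈ closedBall x₀ tstar,
        Filter.Tendsto x Filter.atTop (nhds xs) ∧ G xs = 0 ∧
        (∀ y ∈ ball x₀ tstst, G y = 0 → y = xs) ∧
        (∀ k, ‖xs - x (k + 1)‖ ≤
          (tstar - t (k + 1)) * (‖xs - x k‖ / (tstar - t k)) ^ 3) ∧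
        (∀ k, ‖xs - x (k + 1)‖ ≤
          8 * γ ^ 2 / (3 * (2 * (1 - γ * tstar) ^ 2 - 1) ^ 2) * ‖xs - x k‖ ^ 3) := by
  -- scalars
  obtain ⟨α, hαd⟩ : ∃ α, α = β * γ := ⟨_, rfl⟩
  rw [← hαd] at hα hts htss
  have hα0 : 0 < α := by rw [hαd]; positivity
  have hs2 : Real.sqrt 2 ^ 2 = 2 := Real.sq_sqrt (by norm_num)
  have hs20 : 1 < Real.sqrt 2 := by
    rw [Real.lt_sqrt (by norm_num)]; norm_num
  have hα1 : α < 1 := by linarith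
  have hdisc : 0 < (1 + α) ^ 2 - 8 * α := by nlinarith
  obtain ⟨s, hsd⟩ : ∃ s, s = Real.sqrt ((1 + α) ^ 2 - 8 * α) := ⟨_, rfl⟩
  have hs0 : 0 < s := by rw [hsd]; exact Real.sqrt_pos.mpr hdisc
  have hss : s ^ 2 = (1 + α) ^ 2 - 8 * α := by rw [hsd]; exact Real.sq_sqrt hdisc.le
  rw [← hsd] at hts htss
  have hs1 : s < 1 + α := by nlinarith
  obtain ⟨u, hud⟩ : ∃ u, u = (3 - α + s) / 4 := ⟨_, rfl⟩
  obtain ⟨w, hwd⟩ : ∃ w, w = (3 - α - s) / 4 := ⟨_, rfl⟩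
  have huw : u * w = 1 / 2 := by rw [hud, hwd]; nlinarith
  have huw' : w < u := by rw [hud, hwd]; linarith
  have hu0 : 0 < u := by rw [hud]; linarith
  have hw0 : 0 < w := by
    by_contra hcon
    push Not at hcon
    nlinarith
  have hu1 : u < 1 := by rw [hud]; linarith
  have hu2 : 1 < 2 * u ^ 2 := by nlinarith
  have huT : u = 1 - γ * tstar := by rw [hts, hud]; field_simp; ring
  have hwT : w = 1 - γ * tstst := by rw [htss, hwd]; field_simp; ring
  have hβu : β * γ * u = (1 - u) * (2 * u - 1) := by
    rw [← hαd, hud]; nlinarith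
  have hT0 : 0 < tstar := by
    by_contra hcon
    push Not at hcon
    nlinarith
  have hTγ : tstar < 1 / γ := by rw [lt_div_iff₀ hγ]; linarith
  have hSγ : tstst < 1 / γ := by rw [lt_div_iff₀ hγ]; linarith
  -- the sequence t
  have hscal : ∀ k, 0 ≤ t k → t k < tstar → ∀ Δ, Δ = f (t k) / ((2 - 1 / (1 - γ * t k) ^ 2) *
      (1 - f (t k) * (2 * γ / (1 - γ * t k) ^ 3) / (2 * (2 - 1 / (1 - γ * t k) ^ 2) ^ 2))) →
      t (k + 1) = t k + Δ := by
    intro k _ _ Δ hΔ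
    have e1 : f1 (t k) = -(2 - 1 / (1 - γ * t k) ^ 2) := by rw [hf1]; ring
    rw [hrec k, e1, hf2, hΔ, neg_sq, div_neg]
    generalize 2 - 1 / (1 - γ * t k) ^ 2 = A
    generalize 1 - f (t k) * (2 * γ / (1 - γ * t k) ^ 3) / (2 * A ^ 2) = B
    rw [div_mul_eq_div_div]
    ring
  have hsc := fun k (h0 : 0 ≤ t k) (h1 : t k < tstar) =>
    hal_scalar γ β u tstar (t k) (1 - γ * t k) (f (t k)) (2 - 1 / (1 - γ * t k) ^ 2)
      (2 * γ / (1 - γ * t k) ^ 3) _ _ hγ hu0 hu1 hu2 huT hβu h0 h1 rfl (hf _) rfl rfl rfl rfl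
  have htk : ∀ k, 0 ≤ t k ∧ t k < tstar := by
    intro k
    induction k with
    | zero => rw [ht0]; exact ⟨le_rfl, hT0⟩
    | succ k ih =>
      obtain ⟨-, -, -, -, -, -, -, h1, h2, -, -⟩ := hsc k ih.1 ih.2
      rw [← hscal k ih.1 ih.2 _ rfl] at h2
      rw [hscal k ih.1 ih.2 _ rfl] at *
      exact ⟨add_nonneg ih.1 h1, by linarith⟩
  have hmono : ∀ k, t k ≤ t (k + 1) := fun k => by
    obtain ⟨-, -, -, -, -, -, -, h1, -, -, -⟩ := hsc k (htk k).1 (htk k).2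
    rw [hscal k (htk k).1 (htk k).2 _ rfl]; linarith
  have hf0 : ∀ k, f (t k) ≤ 2 * (tstar - t k) := fun k => (hsc k (htk k).1 (htk k).2).2.2.2.1
  have hcub : ∀ k, tstar - t (k + 1) ≤ 2 * γ ^ 2 / (2 * u ^ 2 - 1) ^ 2 * (tstar - t k) ^ 3 := fun k => by
    obtain ⟨-, -, -, -, -, -, -, -, -, h1, -⟩ := hsc k (htk k).1 (htk k).2
    rwa [← hscal k (htk k).1 (htk k).2 _ rfl] at h1
  have hlin : ∀ k, tstar - t (k + 1) ≤ (1 - (2 * u ^ 2 - 1) ^ 2 / 8) * (tstar - t k) := fun k => by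
    obtain ⟨-, -, -, -, -, -, -, -, -, -, h1⟩ := hsc k (htk k).1 (htk k).2
    rwa [← hscal k (htk k).1 (htk k).2 _ rfl] at h1
  obtain ⟨q, hq⟩ : ∃ q, q = 1 - (2 * u ^ 2 - 1) ^ 2 / 8 := ⟨_, rfl⟩
  rw [← hq] at hlin
  have hq1 : q < 1 := by
    have : 0 < (2 * u ^ 2 - 1) ^ 2 := by
      apply pow_pos; linarith
    rw [hq]; linarith
  have hq0 : 0 ≤ q := by
    have h1 : u ^ 2 ≤ 1 := pow_le_one₀ hu0.le hu1.le
    have : (2 * u ^ 2 - 1) ^ 2 ≤ 1 := pow_le_one₀ (by linarith) (by linarith)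
    rw [hq]; linarith
  have hgeo : ∀ k, tstar - t k ≤ tstar * q ^ k := by
    intro k
    induction k with
    | zero => simp [ht0]
    | succ k ih =>
      calc _ ≤ _ := hlin k
        _ ≤ q * (tstar * q ^ k) := by gcongr
        _ = _ := by ring
  have hgeolim : Filter.Tendsto (fun k => tstar * q ^ k) Filter.atTop (nhds 0) := by
    simpa using (tendsto_pow_atTop_nhds_zero_of_lt_one hq0 hq1).const_mul tstar
  -- steps
  have hstep : ∀ k x, ‖x - x₀‖ ≤ t k → ‖G x‖ ≤ f (t k) →
    ∃ (e m : X ≃L[ℝ] X), (e : X →L[ℝ] X) = G' x ∧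
      (m : X →L[ℝ] X) = ContinuousLinearMap.id ℝ X -
          (2⁻¹ : ℝ) • ((e.symm : X →L[ℝ] X).comp (G'' x (e.symm (G x)))) ∧
      ‖m.symm (e.symm (G x))‖ ≤ t (k + 1) - t k ∧
      ‖G (x - m.symm (e.symm (G x)))‖ ≤ f (t (k + 1)) ∧
      ∀ y, G y = 0 → ‖y - x‖ ≤ tstar - t k →
        ‖y - (x - m.symm (e.symm (G x)))‖ ≤ (tstar - t (k + 1)) * (‖y - x‖ / (tstar - t k)) ^ 3 := by
    intro k x hx hGx
    have := hal_step D hDconv G G' G'' hdG hdG' x₀ hx₀ hG0 γ β hγ hballD hmaj hinit2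
      u tstar (t k) (1 - γ * t k) (f (t k)) (2 - 1 / (1 - γ * t k) ^ 2)
      (2 * γ / (1 - γ * t k) ^ 3) _ _ hu0 hu1 hu2 huT hβu (htk k).1 (htk k).2 rfl (hf _) rfl rfl rfl rfl
      x hx hGx
    rw [← hscal k (htk k).1 (htk k).2 _ rfl, ← hf] at this
    have e2 := hscal k (htk k).1 (htk k).2 _ rfl
    rwa [← sub_eq_iff_eq_add'.mpr e2] at this
  choose E M hE hM hMn hGn hY using hstep
  let S : ℕ → Type _ := fun k => {x : X // ‖x - x₀‖ ≤ t k ∧ ‖G x‖ ≤ f (t k)}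
  let sq : ∀ k, S k := fun k => Nat.rec (motive := S)
    ⟨x₀, by simp [ht0], by rw [ht0, hf]; simpa using hinit1⟩
    (fun k p => ⟨p.1 - (M k p.1 p.2.1 p.2.2).symm ((E k p.1 p.2.1 p.2.2).symm (G p.1)), by
      have h1 := hMn k p.1 p.2.1 p.2.2
      have h2 := p.2.1
      have h3 := norm_sub_le (p.1 - x₀) ((M k p.1 p.2.1 p.2.2).symm ((E k p.1 p.2.1 p.2.2).symm (G p.1)))
      rw [sub_right_comm] at h3
      linarith, hGn k p.1 p.2.1 p.2.2⟩) k
  obtain ⟨x, hx⟩ : ∃ x : ℕ → X, ∀ k, x k = (sq k).1 := ⟨fun k => (sq k).1, fun _ => rfl⟩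
  have hx1 : ∀ k, ‖x k - x₀‖ ≤ t k := fun k => by rw [hx]; exact (sq k).2.1
  have hx2 : ∀ k, ‖G (x k)‖ ≤ f (t k) := fun k => by rw [hx]; exact (sq k).2.2
  have hxs : ∀ k, x (k + 1) = x k - (M k (x k) (hx1 k) (hx2 k)).symm
      ((E k (x k) (hx1 k) (hx2 k)).symm (G (x k))) := fun k => by
    obtain rfl : x = fun k => (sq k).1 := funext hx
    rfl
  have hxd : ∀ k, ‖x (k + 1) - x k‖ ≤ t (k + 1) - t k := fun k => by
    have := hMn k (x k) (hx1 k) (hx2 k)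
    rw [hxs k, sub_sub_cancel_left, norm_neg]; exact this
  have hYx : ∀ k y, G y = 0 → ‖y - x k‖ ≤ tstar - t k →
      ‖y - x (k + 1)‖ ≤ (tstar - t (k + 1)) * (‖y - x k‖ / (tstar - t k)) ^ 3 := fun k y h1 h2 => by
    have := hY k (x k) (hx1 k) (hx2 k) y h1 h2
    rw [hxs k]; exact this
  have hx0 : x 0 = x₀ := by rw [hx]; rfl
  clear_value sq
  have hcauchy : CauchySeq x := by
    refine cauchySeq_of_le_geometric q tstar hq1 fun k => ?_
    rw [dist_comm, dist_eq_norm]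
    linarith [hxd k, hgeo k, (htk (k + 1)).2]
  obtain ⟨xs, hlim⟩ := cauchySeq_tendsto_of_complete hcauchy
  have htel : ∀ k n, ‖x (k + n) - x k‖ ≤ t (k + n) - t k := by
    intro k n
    induction n with
    | zero => simp
    | succ n ih =>
      have h1 := hxd (k + n)
      have h2 := norm_add_le (x (k + n + 1) - x (k + n)) (x (k + n) - x k)
      rw [sub_add_sub_cancel] at h2
      rw [← add_assoc]; linarith
  have hxsk : ∀ k, ‖xs - x k‖ ≤ tstar - t k := by
    intro k
    have h1 : Filter.Tendsto (fun n => ‖x (n + k) - x k‖) Filter.atTop (nhds ‖xs - x k‖) :=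
      (((Filter.tendsto_add_atTop_iff_nat k).mpr hlim).sub_const (x k)).norm
    refine le_of_tendsto' h1 fun n => ?_
    rw [add_comm n k]
    linarith [htel k n, (htk (k + n)).2]
  have hxs0 : ‖xs - x₀‖ ≤ tstar := by
    have := hxsk 0
    rwa [hx0, ht0, sub_zero] at this
  have hxsD : xs ∈ D := hballD (by rw [mem_ball, dist_eq_norm]; linarith)
  have hGxs : G xs = 0 := by
    have h1 : Filter.Tendsto (fun k => G (x k)) Filter.atTop (nhds (G xs)) :=
      (hdG xs hxsD).continuousAt.tendsto.comp hlim
    have h2 : Filter.Tendsto (fun k => G (x k)) Filter.atTop (nhds 0) := by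
      refine squeeze_zero_norm (a := fun k => 2 * (tstar * q ^ k)) (fun k => ?_) ?_
      · linarith [hx2 k, hf0 k, hgeo k]
      · simpa using hgeolim.const_mul 2
    exact tendsto_nhds_unique h1 h2
  refine ⟨x, fun k => E k (x k) (hx1 k) (hx2 k), fun k => M k (x k) (hx1 k) (hx2 k), hx0,
    fun k => ⟨hE _ _ _ _, hM _ _ _ _, hxs k⟩, fun k => ?_, xs, ?_, hlim, hGxs, ?_,
    fun k => hYx k xs hGxs (hxsk k), fun k => ?_⟩
  · rw [mem_ball, dist_eq_norm]; exact lt_of_le_of_lt (hx1 k) (htk k).2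
  · rw [mem_closedBall, dist_eq_norm]; exact hxs0
  · intro y hy hGy
    rw [mem_ball, dist_eq_norm] at hy
    obtain ⟨r, hr⟩ : ∃ r, r = ‖y - x₀‖ := ⟨_, rfl⟩
    rw [← hr] at hy
    have hr0 : 0 ≤ r := by rw [hr]; positivity
    have hrγ : γ * r < 1 := by
      have : r < 1 / γ := hy.trans hSγ
      rw [lt_div_iff₀ hγ] at this; linarith
    have hyD : y ∈ D := hballD (by rw [mem_ball, dist_eq_norm, ← hr]; linarith)
    have hmaj0 : ∀ z ∈ D, ‖z - x₀‖ ≤ r → ‖G'' z - G'' x₀‖ ≤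
        2 * γ / (1 - γ * ‖z - x₀‖) ^ 3 - 2 * γ / (1:ℝ) ^ 3 := fun z hz hzn => by
      have h1 := hmaj x₀ hx₀ z hz (by simp only [sub_self, norm_zero, add_zero]; linarith)
      simpa using h1
    have h1 := (hal_taylor D hDconv G G' G'' hdG hdG' γ 1 r hγ x₀ (y - x₀) hx₀ (by simpa using hyD)
      hr.symm hrγ hmaj0).2
    rw [add_sub_cancel, hGy, hG0] at h1
    have h2 : ‖G'' x₀ (y - x₀) (y - x₀)‖ ≤ 2 * γ * r * r := by
      have := (G'' x₀).le_opNorm₂ (y - x₀) (y - x₀)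
      rw [← hr] at this
      exact this.trans (by gcongr)
    have h3 : r ≤ γ ^ 2 * r ^ 3 / (1 - γ * r) + β + γ * r * r := by
      have e1 : y - x₀ = -((0 - G x₀ - (ContinuousLinearMap.id ℝ X) (y - x₀) -
        (2⁻¹ : ℝ) • G'' x₀ (y - x₀) (y - x₀)) + G x₀ + (2⁻¹ : ℝ) • G'' x₀ (y - x₀) (y - x₀)) := by
        simp only [ContinuousLinearMap.id_apply]; abel
      have e2 : r ≤ _ := hr.le.trans (le_of_eq (congrArg norm e1))
      rw [norm_neg] at e2
      have e3 := norm_add₃_le (a := 0 - G x₀ - (ContinuousLinearMap.id ℝ X) (y - x₀) -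
        (2⁻¹ : ℝ) • G'' x₀ (y - x₀) (y - x₀)) (b := G x₀) (c := (2⁻¹ : ℝ) • G'' x₀ (y - x₀) (y - x₀))
      have e4 : ‖(2⁻¹ : ℝ) • G'' x₀ (y - x₀) (y - x₀)‖ ≤ γ * r * r := by
        rw [norm_smul]
        have : ‖(2⁻¹ : ℝ)‖ = 2⁻¹ := by norm_num
        rw [this]; linarith
      simp only [one_pow, one_mul] at h1
      linarith
    have h4 : 0 ≤ 2 * γ * (tstar - r) * (tstst - r) := by
      have hp : 0 < 1 - γ * r := by linarith
      have e1 : (γ ^ 2 * r ^ 3 / (1 - γ * r) + β + γ * r * r - r) * (1 - γ * r) =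
          2 * γ * (tstar - r) * (tstst - r) := by
        have hu' : tstar = (1 - u) / γ := by field_simp; linarith
        have hw' : tstst = (1 - w) / γ := by field_simp; linarith
        have e2 : u + w = (3 - β * γ) / 2 := by rw [hud, hwd, ← hαd]; ring
        have e3 : 2 * γ * (tstar - r) * (tstst - r) = 2 / γ * (1 - (u + w) + u * w - γ * r * (2 - (u + w)) + (γ * r) ^ 2) := by
          rw [hu', hw']; field_simp; ring
        rw [e3, e2, huw]
        field_simp
        ring
      rw [← e1]
      exact mul_nonneg (by linarith) hp.le
    have hrT : r ≤ tstar := by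
      by_contra hcon
      push Not at hcon
      have : 0 < 2 * γ * (r - tstar) * (tstst - r) := by
        have h5 : 0 < r - tstar := by linarith
        have h6 : 0 < tstst - r := by linarith
        positivity
      linarith
    have hyk : ∀ k, ‖y - x k‖ ≤ tstar - t k := by
      intro k
      induction k with
      | zero => rw [hx0, ht0, ← hr]; linarith
      | succ k ih =>
        have h5 : 0 < tstar - t k := by linarith [(htk k).2]
        have h6 : 0 < tstar - t (k + 1) := by linarith [(htk (k + 1)).2]
        refine (hYx k y hGy ih).trans ?_
        have h7 : (‖y - x k‖ / (tstar - t k)) ^ 3 ≤ 1 :=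
          pow_le_one₀ (by positivity) ((div_le_one h5).mpr ih)
        nlinarith
    have hlim2 : Filter.Tendsto x Filter.atTop (nhds y) := by
      rw [tendsto_iff_norm_sub_tendsto_zero]
      refine squeeze_zero (fun k => norm_nonneg _) (fun k => ?_) hgeolim
      rw [norm_sub_rev]
      exact (hyk k).trans (hgeo k)
    exact tendsto_nhds_unique hlim2 hlim
  · refine (hYx k xs hGxs (hxsk k)).trans ?_
    have h5 : 0 < tstar - t k := by linarith [(htk k).2]
    rw [← huT]
    have hd0 : 0 < 2 * u ^ 2 - 1 := by linarith
    calc (tstar - t (k + 1)) * (‖xs - x k‖ / (tstar - t k)) ^ 3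
        ≤ (2 * γ ^ 2 / (2 * u ^ 2 - 1) ^ 2 * (tstar - t k) ^ 3) * (‖xs - x k‖ / (tstar - t k)) ^ 3 := by
          gcongr; exact hcub k
      _ = 2 * γ ^ 2 / (2 * u ^ 2 - 1) ^ 2 * ‖xs - x k‖ ^ 3 := by
          field_simp
      _ ≤ _ := by
          gcongr ?_ * _
          rw [div_le_div_iff₀ (by positivity) (by positivity)]
          have : 0 ≤ γ ^ 2 * (2 * u ^ 2 - 1) ^ 2 := by positivity
          linarith

/-- Smale-type convergence of Halley's method under the majorant
γ-condition: if `‖F'(x₀)⁻¹[F''(y) - F''(x)]‖ ≤ 2γ/(1 - γ‖y - x‖ - γ‖x - x₀‖)³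
- 2γ/(1 - γ‖x - x₀‖)³` whenever `‖y - x‖ + ‖x - x₀‖ < 1/γ`,
`‖F'(x₀)⁻¹F(x₀)‖ ≤ β`, `‖F'(x₀)⁻¹F''(x₀)‖ ≤ 2γ` and `α = βγ < 3 - 2√2`, then the
Halley sequence starting at `x₀` is well defined, stays in `B(x₀,t*)` and
converges to a zero `xs` of `F` in the closed ball of radius `t*`, unique in
`B(x₀,t**)`, with the stated error bounds, where
`t* = (1 + α - √((1+α)² - 8α))/(4γ)`, `t** = (1 + α + √((1+α)² - 8α))/(4γ)`, and
`(t_k)` is the majorizing sequence generated by applying Halley's method to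
`f(s) = β - s + γs²/(1 - γs)`. -/
theorem halley_method_smale_gamma_condition
    {X Y : Type*} [NormedAddCommGroup X] [NormedSpace ℝ X] [CompleteSpace X]
    [NormedAddCommGroup Y] [NormedSpace ℝ Y] [CompleteSpace Y]
    (D : Set X) (hD : IsOpen D) (hDconv : Convex ℝ D)
    (F : X → Y) (F' : X → X →L[ℝ] Y) (F'' : X → X →L[ℝ] X →L[ℝ] Y)
    (hdF : ∀ x ∈ D, HasFDerivAt F (F' x) x)
    (hdF' : ∀ x ∈ D, HasFDerivAt F' (F'' x) x)
    (hcF'' : ContinuousOn F'' D)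
    (x₀ : X) (hx₀ : x₀ ∈ D)
    (e0 : X ≃L[ℝ] Y) (he0 : (e0 : X →L[ℝ] Y) = F' x₀)
    (γ β : ℝ) (hγ : 0 < γ) (hβ : 0 < β)
    (hballD : ball x₀ (1 / γ) ⊆ D)
    (hmaj : ∀ x ∈ D, ∀ y ∈ D, ‖y - x‖ + ‖x - x₀‖ < 1 / γ →
      ‖(ContinuousLinearMap.compL ℝ X Y X (e0.symm : Y →L[ℝ] X)).comp
          (F'' y - F'' x)‖ ≤
        2 * γ / (1 - γ * ‖y - x‖ - γ * ‖x - x₀‖) ^ 3 -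
          2 * γ / (1 - γ * ‖x - x₀‖) ^ 3)
    (hinit1 : ‖(e0.symm : Y →L[ℝ] X) (F x₀)‖ ≤ β)
    (hinit2 : ‖(ContinuousLinearMap.compL ℝ X Y X (e0.symm : Y →L[ℝ] X)).comp
        (F'' x₀)‖ ≤ 2 * γ)
    (hα : β * γ < 3 - 2 * Real.sqrt 2)
    (f f1 f2 : ℝ → ℝ)
    (hf : ∀ s, f s = β - s + γ * s ^ 2 / (1 - γ * s))
    (hf1 : ∀ s, f1 s = -2 + 1 / (1 - γ * s) ^ 2)
    (hf2 : ∀ s, f2 s = 2 * γ / (1 - γ * s) ^ 3)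
    (tstar tstst : ℝ)
    (hts : tstar = (1 + β * γ - Real.sqrt ((1 + β * γ) ^ 2 - 8 * (β * γ))) / (4 * γ))
    (htss : tstst = (1 + β * γ + Real.sqrt ((1 + β * γ) ^ 2 - 8 * (β * γ))) / (4 * γ))
    (t : ℕ → ℝ) (ht0 : t 0 = 0)
    (hrec : ∀ k, t (k + 1) =
      t k - (1 / (1 - f (t k) * f2 (t k) / (2 * (f1 (t k)) ^ 2))) * (f (t k) / f1 (t k))) :
    ∃ (x : ℕ → X) (e : ℕ → (X ≃L[ℝ] Y)) (m : ℕ → (X ≃L[ℝ] X)),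
      x 0 = x₀ ∧
      (∀ k,
        ((e k : X →L[ℝ] Y) = F' (x k)) ∧
        ((m k : X →L[ℝ] X) = ContinuousLinearMap.id ℝ X -
          (2⁻¹ : ℝ) • (((e k).symm : Y →L[ℝ] X).comp
            ((F'' (x k)) ((e k).symm (F (x k)))))) ∧
        (x (k + 1) = x k - (m k).symm ((e k).symm (F (x k))))) ∧
      (∀ k, x k ∈ ball x₀ tstar) ∧
      ∃ xs ∈ closedBall x₀ tstar,
        Filter.Tendsto x Filter.atTop (nhds xs) ∧ F xs = 0 ∧
        (∀ y ∈ ball x₀ tstst, F y = 0 → y = xs) ∧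
        (∀ k, ‖xs - x (k + 1)‖ ≤
          (tstar - t (k + 1)) * (‖xs - x k‖ / (tstar - t k)) ^ 3) ∧
        (∀ k, ‖xs - x (k + 1)‖ ≤
          8 * γ ^ 2 / (3 * (2 * (1 - γ * tstar) ^ 2 - 1) ^ 2) * ‖xs - x k‖ ^ 3) := by
  have key := hal_core D hDconv (fun x => e0.symm (F x))
    (fun x => (e0.symm : Y →L[ℝ] X).comp (F' x))
    (fun x => (ContinuousLinearMap.compL ℝ X Y X (e0.symm : Y →L[ℝ] X)).comp (F'' x))
    (fun x hx => (e0.symm : Y →L[ℝ] X).hasFDerivAt.comp x (hdF x hx))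
    (fun x hx => (ContinuousLinearMap.compL ℝ X Y X (e0.symm : Y →L[ℝ] X)).hasFDerivAt.comp x (hdF' x hx))
    x₀ hx₀ (by ext z; rw [← he0]; simp) γ β hγ hβ hballD
    (fun x hx y hy hxy => by
      have := hmaj x hx y hy hxy
      rwa [ContinuousLinearMap.comp_sub] at this)
    hinit1 hinit2 hα f f1 f2 hf hf1 hf2 tstar tstst hts htss t ht0 hrec
  obtain ⟨x, e, m, h0, hk, hb, xs, hxs, hl, hz, hu, h1, h2⟩ := key
  refine ⟨x, fun k => (e k).trans e0, m, h0, fun k => ?_, hb, xs, hxs, hl, ?_, ?_, h1, h2⟩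
  · obtain ⟨a1, a2, a3⟩ := hk k
    refine ⟨?_, ?_, a3⟩
    · ext z
      have := congrArg (fun A : X →L[ℝ] X => e0 (A z)) a1
      simpa using this
    · rw [a2]; rfl
  · simpa using hz
  · intro y hy hFy
    exact hu y hy (by simp [hFy])
end
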